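/- Let G be a maximal 1-plane graph and let F₁ and F₂ be two faces of the drawing of G that share a non-crossing edge e. If v₁ and v₂ are vertices of G with v₁ ∈ ∂(F₁)∖∂(F₂) and v₂ ∈ ∂(F₂)∖∂(F₁), then v₁ and v₂ are adjacent in G. -/

import Mathlib

open Set

/-- A drawing of a simple graph in the plane: each vertex is assigned a distinct point,
and each edge a continuous arc (an injective continuous curve) joining its endpoints. -/
structure Drawing {V : Type} (G : SimpleGraph V) where
  pos : V → ℝ × ℝ
  pos_inj : Function.Injective pos
  arc : ∀ ⦃u v : V⦄, G.Adj u v → Set (ℝ × ℝ)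
  arc_symm : ∀ ⦃u v : V⦄ (h : G.Adj u v), arc h.symm = arc h
  arc_isArc : ∀ ⦃u v : V⦄ (h : G.Adj u v), ∃ γ : ℝ → ℝ × ℝ,
    ContinuousOn γ (Set.Icc 0 1) ∧ Set.InjOn γ (Set.Icc 0 1) ∧
    γ 0 = pos u ∧ γ 1 = pos v ∧ arc h = γ '' Set.Icc (0 : ℝ) 1

namespace Drawing

variable {V : Type} {G : SimpleGraph V} (D : Drawing G)

/-- The interior of the arc of an edge (the arc minus its endpoints). -/
def arcInt ⦃u v : V⦄ (h : G.Adj u v) : Set (ℝ × ℝ) :=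
  D.arc h \ {D.pos u, D.pos v}

/-- The interior of the drawing of an abstract edge `e : Sym2 V`. -/
def edgeInt (e : Sym2 V) : Set (ℝ × ℝ) :=
  {p | ∃ (u v : V) (h : G.Adj u v), e = s(u, v) ∧ p ∈ D.arcInt h}

/-- Two edges cross if they are distinct and their interiors meet. -/
def Cross (e f : Sym2 V) : Prop :=
  e ≠ f ∧ (D.edgeInt e ∩ D.edgeInt f).Nonempty

/-- The set of crossing points of the drawing. -/
def crossingSet : Set (ℝ × ℝ) :=
  {p | ∃ e f : Sym2 V, e ≠ f ∧ p ∈ D.edgeInt e ∧ p ∈ D.edgeInt f}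

/-- A good drawing: no vertex lies on the arc of a non-incident edge, any two distinct
edges meet in at most one interior point, and edges sharing an endpoint do not cross. -/
def IsGood : Prop :=
  (∀ (w : V) ⦃u v : V⦄ (h : G.Adj u v), D.pos w ∈ D.arc h → w = u ∨ w = v) ∧
  (∀ e f : Sym2 V, e ≠ f → (D.edgeInt e ∩ D.edgeInt f).Subsingleton) ∧
  (∀ ⦃u v w : V⦄ (h₁ : G.Adj u v) (h₂ : G.Adj u w), v ≠ w →
    D.arcInt h₁ ∩ D.arcInt h₂ = ∅)

/-- A drawing is 1-planar if every edge is crossed at most once. -/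
def IsOnePlanar : Prop :=
  ∀ e : Sym2 V, {f : Sym2 V | D.Cross e f}.Subsingleton

/-- The number of crossings of the drawing (each unordered pair of crossing edges
contributes one crossing). -/
noncomputable def crNum : ℕ :=
  Set.ncard {p : Sym2 V × Sym2 V | D.Cross p.1 p.2} / 2

/-- The subset of the plane covered by the drawing. -/
def drawingSet : Set (ℝ × ℝ) :=
  Set.range D.pos ∪ ⋃ (u : V) (v : V) (h : G.Adj u v), D.arc h

/-- A face of the drawing: a connected component of the complement of the drawing. -/
def IsFace (F : Set (ℝ × ℝ)) : Prop :=
  ∃ p ∉ D.drawingSet, F = connectedComponentIn D.drawingSetᶜ p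

/-- The set `∂(F)` of vertices on the boundary of a face `F`. -/
def faceVerts (F : Set (ℝ × ℝ)) : Set V :=
  {v | D.pos v ∈ frontier F}

/-- A true face of the planarization `G^×`: a face of the drawing whose boundary
contains no crossing point (i.e. it is incident with no fake vertex). -/
def IsTrueFace (F : Set (ℝ × ℝ)) : Prop :=
  D.IsFace F ∧ ∀ p ∈ D.crossingSet, p ∉ frontier F

/-- Two faces are adjacent if their boundaries share a common edge of the planarization,
i.e. they share a boundary point that is neither a vertex nor a crossing point. -/
def FaceAdj (F₁ F₂ : Set (ℝ × ℝ)) : Prop :=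
  F₁ ≠ F₂ ∧ ∃ p, p ∈ frontier F₁ ∧ p ∈ frontier F₂ ∧
    p ∉ Set.range D.pos ∧ p ∉ D.crossingSet

/-- The planarization `G^×` (crossings made into vertices of degree `4`) is a
triangulation: every face of the drawing has exactly three vertices of `G^×`
(true vertices or crossing points) on its boundary. -/
def PlanarizationIsTriangulation : Prop :=
  ∀ F : Set (ℝ × ℝ), D.IsFace F →
    ((Set.range D.pos ∪ D.crossingSet) ∩ frontier F).ncard = 3

/-- A maximal 1-plane graph: the drawing is good and 1-planar, and no edge between two
distinct non-adjacent vertices can be added to the drawing so that the result is still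
a good 1-planar drawing. -/
def IsMaximalOnePlane : Prop :=
  D.IsGood ∧ D.IsOnePlanar ∧
  ∀ u v : V, u ≠ v → ¬G.Adj u v →
    ∀ D' : Drawing (G ⊔ SimpleGraph.fromEdgeSet {s(u, v)}),
      D'.pos = D.pos →
      (∀ ⦃x y : V⦄ (h : G.Adj x y),
        D'.arc ((SimpleGraph.sup_adj _ _ _ _).mpr (Or.inl h)) = D.arc h) →
      ¬(D'.IsGood ∧ D'.IsOnePlanar)

/-- A maximal 1-plane graph is immovable if its number of crossings does not exceed that
of any good 1-planar drawing obtained from it by redrawing exactly one edge. -/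
def Immovable : Prop :=
  ∀ D' : Drawing G, D'.IsGood → D'.IsOnePlanar → D'.pos = D.pos →
    (∃ (u v : V) (_ : G.Adj u v), ∀ ⦃x y : V⦄ (h' : G.Adj x y),
      s(x, y) ≠ s(u, v) → D'.arc h' = D.arc h') →
    D.crNum ≤ D'.crNum

/-- The drawing induced on a subgraph. -/
def restrict {H : SimpleGraph V} (hle : H ≤ G) : Drawing H where
  pos := D.pos
  pos_inj := D.pos_inj
  arc := fun _ _ h => D.arc (hle h)
  arc_symm := fun _ _ h => D.arc_symm (hle h)
  arc_isArc := fun _ _ h => D.arc_isArc (hle h)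

/-- `H` is a planar skeleton `G_P` of the 1-plane graph `(G, D)`: it is obtained from `G`
by removing exactly one edge from each pair of crossing edges. -/
def IsPlanarSkeleton {H : SimpleGraph V} (_ : H ≤ G) : Prop :=
  (∀ e f : Sym2 V, D.Cross e f → (e ∈ H.edgeSet ↔ f ∉ H.edgeSet)) ∧
  ∀ e ∈ G.edgeSet, (¬∃ f, D.Cross e f) → e ∈ H.edgeSet

/-- `c_G(v)`: the number of crossing edges of the drawing incident with `v`. -/
noncomputable def cDeg (v : V) : ℕ :=
  Set.ncard {w : V | G.Adj v w ∧ ∃ f, D.Cross s(v, w) f}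

end Drawing

/-- The crossing number of a graph: the least number of crossings in a good drawing. -/
noncomputable def crossingNumber {V : Type} (G : SimpleGraph V) : ℕ :=
  sInf {n | ∃ D : Drawing G, D.IsGood ∧ D.crNum = n}

/-- A graph is `k`-connected if it stays connected after deleting any set of fewer than
`k` vertices. -/
def KConnected {V : Type} (G : SimpleGraph V) (k : ℕ) : Prop :=
  ∀ S : Set V, S.ncard < k → (G.induce Sᶜ).Connected

/-- A graph is 1-planar if it admits a good 1-planar drawing. -/
def Is1Planar {V : Type} (G : SimpleGraph V) : Prop :=
  ∃ D : Drawing G, D.IsGood ∧ D.IsOnePlanar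

/-- A maximal 1-planar graph: 1-planar, and adding any edge between distinct
non-adjacent vertices destroys 1-planarity. -/
def IsMaximal1Planar {V : Type} (G : SimpleGraph V) : Prop :=
  Is1Planar G ∧ ∀ u v : V, u ≠ v → ¬G.Adj u v →
    ¬Is1Planar (G ⊔ SimpleGraph.fromEdgeSet {s(u, v)})

/-!
If `v₁` and `v₂` were not adjacent, one could draw an edge between them that runs through `F₁` to
an interior point of `e` and on through `F₂`. It crosses only `e`, and `e` is crossed by nothing
else, so the drawing would stay good and 1-planar.

Since the edges are arbitrary continuous arcs, the point to prove is that a boundary point of a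
face can be reached by an arc inside the face. Nearby, the drawing cuts the plane into finitely
many sectors: by Eilenberg's criterion, points of the plane are separated by a compact set exactly
when some quotient of linear factors has no continuous logarithm on it, and on a finite union of
arcs with finite pairwise intersections such quotients fall into finitely many classes. A sector
at the point contains a smaller one, and an arc through a decreasing sequence of sectors ends at
the point.
-/

/-! ### Continuous logarithms -/

section Logarithms

variable {X Y : Type*} [TopologicalSpace X] [TopologicalSpace Y]

/-- `f` has a continuous logarithm on the set `S`. -/
def HasLogOn (f : X → ℂ) (S : Set X) : Prop :=
  ∃ g : X → ℂ, ContinuousOn g S ∧ EqOn (Complex.exp ∘ g) f S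

/-- Every nonvanishing continuous function on `S` has a continuous logarithm on `S`. -/
def HasAllLogs (S : Set X) : Prop :=
  ∀ f : X → ℂ, ContinuousOn f S → (∀ x ∈ S, f x ≠ 0) → HasLogOn f S

namespace HasLogOn

variable {f : X → ℂ} {S T : Set X}

lemma mono (h : HasLogOn f S) (hTS : T ⊆ S) : HasLogOn f T :=
  h.imp fun _ hg => ⟨hg.1.mono hTS, hg.2.mono hTS⟩

lemma congr {f' : X → ℂ} (h : HasLogOn f S) (hff' : EqOn f f' S) : HasLogOn f' S :=
  h.imp fun _ hg => ⟨hg.1, hg.2.trans hff'⟩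

lemma exists_continuous [NormalSpace X] (h : HasLogOn f S) (hS : IsClosed S) :
    ∃ g : X → ℂ, Continuous g ∧ EqOn (Complex.exp ∘ g) f S := by
  obtain ⟨g, hgc, hg⟩ := h
  obtain ⟨g', hg'⟩ := ContinuousMap.exists_restrict_eq hS
    ⟨S.domRestrict g, continuousOn_iff_continuous_domRestrict.mp hgc⟩
  refine ⟨g', g'.continuous, fun x hx => ?_⟩
  rw [← hg hx]
  exact congrArg Complex.exp (DFunLike.congr_fun hg' ⟨x, hx⟩)

end HasLogOn

lemma exists_continuous_log [SimplyConnectedSpace X] [LocallyPathConnectedSpace X] {f : X → ℂ}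
    (hf : Continuous f) (h0 : ∀ x, f x ≠ 0) :
    ∃ g : X → ℂ, Continuous g ∧ ∀ x, Complex.exp (g x) = f x := by
  obtain ⟨x₀⟩ : Nonempty X := inferInstance
  obtain ⟨g, ⟨-, hg⟩, -⟩ := Complex.isCoveringMapOn_exp.existsUnique_continuousMap_lifts
    ⟨f, hf⟩ (a₀ := x₀) (Complex.exp_log (h0 x₀)) h0
  exact ⟨g, g.continuous, congrFun hg⟩

namespace HasAllLogs

lemma image {S : Set X} (hS : HasAllLogs S) {γ : X → Y} (hγ : Topology.IsEmbedding γ) :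
    HasAllLogs (γ '' S) := by
  intro f hf h0
  obtain ⟨g, hgc, hg⟩ := hS (f ∘ γ) (hγ.isInducing.continuousOn_image_iff.1 hf)
    fun x hx => h0 _ (mem_image_of_mem γ hx)
  have hext : Function.extend γ g 0 ∘ γ = g := funext (hγ.injective.extend_apply g 0)
  refine ⟨Function.extend γ g 0, ?_, ?_⟩
  · rwa [hγ.isInducing.continuousOn_image_iff, hext]
  · rintro _ ⟨x, hx, rfl⟩
    simpa only [Function.comp_apply, hγ.injective.extend_apply] using hg hx

lemma empty : HasAllLogs (∅ : Set X) :=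
  fun _ _ _ => ⟨0, continuousOn_empty _, eqOn_empty _ _⟩

lemma singleton (x : X) : HasAllLogs {x} :=
  fun f _ h0 => ⟨fun _ => Complex.log (f x), continuousOn_const,
    fun _ hy => (Complex.exp_log (h0 x rfl)).trans (congrArg f hy.symm)⟩

end HasAllLogs

lemma hasAllLogs_Icc {a b : unitInterval} (hab : a ≤ b) : HasAllLogs (Icc a b) := by
  intro f hf h0
  have hcont : Continuous (IccExtend hab ((Icc a b).domRestrict f)) :=
    (continuousOn_iff_continuous_domRestrict.1 hf).Icc_extend'
  obtain ⟨g, hgc, hg⟩ := exists_continuous_log (hcont.Icc_extend' (h := zero_le_one))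
    fun _ => h0 _ (Subtype.coe_prop _)
  refine ⟨g ∘ Subtype.val, (hgc.comp continuous_subtype_val).continuousOn, fun t ht => ?_⟩
  simp only [Function.comp_apply, hg, IccExtend_val, IccExtend_of_mem hab _ ht, domRestrict_apply]

end Logarithms

/-! ### The Eilenberg criterion -/

lemma eq_zero_of_exp_eq_zpow_on_sphere {φ : ℂ → ℂ} (hφ : Continuous φ) {x : ℂ} {R : ℝ} (hR : R ≠ 0)
    {m : ℤ} (h : ∀ t, Complex.exp (φ (circleMap x R t)) = (circleMap x R t - x) ^ m) : m = 0 := by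
  have hlift : (fun t : ℝ => φ (circleMap x R t) - φ (circleMap x R 0)) =
      fun t : ℝ => m * (t * Complex.I) := by
    refine Complex.isCoveringMap_exp.eq_of_comp_eq (by fun_prop) (by fun_prop)
      (funext fun t => Subtype.ext ?_) 0 (by simp)
    have hR' : (R : ℂ) ^ m ≠ 0 := zpow_ne_zero m (Complex.ofReal_ne_zero.2 hR)
    simp only [Function.comp_apply, Complex.exp_sub, h, Complex.exp_int_mul, circleMap_sub_center]
    simp only [circleMap, mul_zpow, Complex.ofReal_zero, zero_mul, Complex.exp_zero,
      mul_one, zero_add, mul_div_cancel_left₀ _ hR']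
  have h2π := congrFun hlift (2 * Real.pi)
  rw [← zero_add (2 * Real.pi), periodic_circleMap, sub_self] at h2π
  simpa using h2π.symm

-- Extend the logarithm to the plane, divide its exponential by `q` on `U` and continue by
-- `(z - x) ^ m` off `U`: this nonvanishing function has a global logarithm, so its winding number
-- `m` around a large circle is zero.
lemma eq_zero_of_hasLogOn_frontier {U : Set ℂ} (hU : IsOpen U) (hb : Bornology.IsBounded U) {x : ℂ}
    (hx : x ∈ U) {m : ℤ} {q : ℂ → ℂ} (hq : ContinuousOn q (closure U))
    (hq0 : ∀ z ∈ closure U, q z ≠ 0)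
    (hlog : HasLogOn (fun z => (z - x) ^ m * q z) (frontier U)) : m = 0 := by
  classical
  obtain ⟨g, hgc, hg⟩ := hlog.exists_continuous isClosed_frontier
  set G : ℂ → ℂ := fun z => if z ∈ U then Complex.exp (g z) / q z else (z - x) ^ m with hG
  have hne : ∀ z ∉ U, z - x ≠ 0 := fun z hz h => hz (sub_eq_zero.1 h ▸ hx)
  have hGc : Continuous G := by
    refine continuous_if (fun z hz => ?_) (by fun_prop (disch := exact hq0)) ?_
    · rw [← Function.comp_apply (f := Complex.exp), hg hz, mul_div_cancel_right₀ _ (hq0 z hz.1)]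
    · refine ContinuousOn.zpow₀ (by fun_prop) _ fun z hz => Or.inl (hne z ?_)
      exact hU.isClosed_compl.closure_subset hz
  have hG0 : ∀ z, G z ≠ 0 := by
    intro z
    by_cases hz : z ∈ U
    · simpa [hG, hz] using hq0 z (subset_closure hz)
    · simpa only [hG, hz, if_false] using zpow_ne_zero m (hne z hz)
  obtain ⟨φ, hφc, hφ⟩ := exists_continuous_log hGc hG0
  obtain ⟨R, hR0, hR⟩ := hb.subset_ball_lt 0 x
  refine eq_zero_of_exp_eq_zpow_on_sphere (x := x) hφc hR0.ne' fun t => ?_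
  have ht : circleMap x R t ∉ U := fun h => circleMap_notMem_ball x R t (hR h)
  simp only [hφ, hG, ht, if_false]

lemma frontier_connectedComponentIn_compl_subset {X : Type*} [TopologicalSpace X]
    [LocallyConnectedSpace X] {K : Set X} (hK : IsClosed K) (x : X) :
    frontier (connectedComponentIn Kᶜ x) ⊆ K := by
  intro z hz
  by_contra hzK
  have hopen : ∀ y, IsOpen (connectedComponentIn Kᶜ y) := fun _ =>
    hK.isOpen_compl.connectedComponentIn
  obtain ⟨w, hwz, hwx⟩ := mem_closure_iff.1 hz.1 _ (hopen z) (mem_connectedComponentIn hzK)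
  rw [(hopen x).frontier_eq, connectedComponentIn_eq hwx, ← connectedComponentIn_eq hwz] at hz
  exact hz.2 (mem_connectedComponentIn hzK)

lemma eilenberg_criterion {K : Set ℂ} (hK : IsClosed K) {κ : Type*} {s : Finset κ} {x : κ → ℂ}
    {y : ℂ} {i : κ} (hi : i ∈ s) (hxK : ∀ k ∈ s, x k ∉ K) (hyK : y ∉ K)
    (hx : ∀ k ∈ s, k ≠ i → x k ∉ connectedComponentIn Kᶜ (x i))
    (hy : y ∉ connectedComponentIn Kᶜ (x i))
    (hb : Bornology.IsBounded (connectedComponentIn Kᶜ (x i))) {c : κ → ℤ}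
    (hlog : HasLogOn (fun z => ∏ k ∈ s, ((z - x k) / (z - y)) ^ c k) K) : c i = 0 := by
  classical
  set U := connectedComponentIn Kᶜ (x i)
  have hfr : frontier U ⊆ K := frontier_connectedComponentIn_compl_subset hK _
  have hsub : ∀ w, w ∉ K → w ∉ U → ∀ z ∈ closure U, z - w ≠ 0 := by
    intro w hwK hwU z hz h
    rw [sub_eq_zero.1 h, closure_eq_self_union_frontier] at hz
    exact hz.elim hwU fun hw => hwK (hfr hw)
  have hy0 := hsub y hyK hy
  have hx0 : ∀ k ∈ s.erase i, ∀ z ∈ closure U, (z - x k) / (z - y) ≠ 0 := fun k hk z hz =>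
    div_ne_zero (hsub _ (hxK k (Finset.mem_of_mem_erase hk))
      (hx k (Finset.mem_of_mem_erase hk) (Finset.ne_of_mem_erase hk)) z hz) (hy0 z hz)
  refine eq_zero_of_hasLogOn_frontier hK.isOpen_compl.connectedComponentIn hb
    (mem_connectedComponentIn (hxK i hi))
    (q := fun z => (∏ k ∈ s.erase i, ((z - x k) / (z - y)) ^ c k) * ((z - y) ^ c i)⁻¹) ?_ ?_
    ((hlog.mono hfr).congr fun z _ => ?_)
  · refine (continuousOn_finsetProd _ fun k hk => ?_).mul ?_
    · exact (ContinuousOn.div (by fun_prop) (by fun_prop) hy0).zpow₀ _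
        fun z hz => Or.inl (hx0 k hk z hz)
    · exact (ContinuousOn.zpow₀ (by fun_prop) _ fun z hz => Or.inl (hy0 z hz)).inv₀
        fun z hz => zpow_ne_zero _ (hy0 z hz)
  · exact fun z hz => mul_ne_zero
      (Finset.prod_ne_zero_iff.2 fun k hk => zpow_ne_zero _ (hx0 k hk z hz))
      (inv_ne_zero (zpow_ne_zero _ (hy0 z hz)))
  · simp only [← Finset.mul_prod_erase _ _ hi, div_zpow]
    ring

/-! ### Multiplicative relations modulo exponentials -/

lemma exists_continuousOn_iUnion {X Y ι : Type*} [TopologicalSpace X] [TopologicalSpace Y]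
    [Nonempty Y] [Finite ι] {P : ι → Set X} (hP : ∀ i, IsClosed (P i)) {b : ι → X → Y}
    (hb : ∀ i, ContinuousOn (b i) (P i)) (hagree : ∀ i j, EqOn (b i) (b j) (P i ∩ P j)) :
    ∃ g : X → Y, ContinuousOn g (⋃ i, P i) ∧ ∀ i, EqOn g (b i) (P i) := by
  classical
  have y₀ : Y := Classical.arbitrary Y
  let g : X → Y := fun x => if h : ∃ i, x ∈ P i then b h.choose x else y₀
  have hg : ∀ i, EqOn g (b i) (P i) := by
    intro i x hx
    have h : ∃ i, x ∈ P i := ⟨i, hx⟩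
    simpa only [g, dif_pos h] using hagree _ _ ⟨h.choose_spec, hx⟩
  exact ⟨g, (locallyFinite_of_finite P).continuousOn_iUnion hP fun i => (hb i).congr (hg i), hg⟩

lemma finite_setOf_mem_pairwise_inter {X ι : Type*} [Finite ι] {P : ι → Set X}
    (hfin : Pairwise fun i j => (P i ∩ P j).Finite) :
    {w : ι × ι × X | w.1 ≠ w.2.1 ∧ w.2.2 ∈ P w.1 ∩ P w.2.1}.Finite := by
  refine (Set.finite_iUnion fun i => Set.finite_iUnion fun j => Set.finite_iUnion fun hij : i ≠ j =>
    (hfin hij).image fun x => (i, j, x)).subset ?_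
  rintro ⟨i, j, x⟩ ⟨hij, hx⟩
  exact mem_iUnion₂.2 ⟨i, j, mem_iUnion.2 ⟨hij, x, hx, rfl⟩⟩

lemma exists_sum_mul_intCast_eq_zero {κ W : Type*} [Infinite κ] [Finite W] (d : κ → W → ℂ) (ω : ℂ)
    (hd : ∀ k w, ∃ m : ℤ, d k w = m * ω) :
    ∃ (s : Finset κ) (c : κ → ℤ), (∃ k ∈ s, c k ≠ 0) ∧ ∀ w, ∑ k ∈ s, c k * d k w = 0 := by
  choose M hM using hd
  have hdep : ¬ LinearIndependent ℤ M := fun h => not_finite_iff_infinite.2 ‹_› h.finite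
  obtain ⟨s, c, hc, hc0⟩ := not_linearIndependent_iff.1 hdep
  refine ⟨s, c, hc0, fun w => ?_⟩
  have hw : ∑ k ∈ s, c k * M k w = 0 := by simpa using congrFun hc w
  calc ∑ k ∈ s, c k * d k w = ((∑ k ∈ s, c k * M k w : ℤ) : ℂ) * ω := by
        push_cast
        simp only [hM, Finset.sum_mul, mul_assoc]
    _ = 0 := by rw [hw, Int.cast_zero, zero_mul]

-- On the finitely many points where two pieces meet, the local logarithms of each `f k` differ by
-- integer multiples of `2πi`; a relation between these jumps makes the logarithms match up.
lemma exists_hasLogOn_iUnion_prod_zpow {X ι κ : Type*} [TopologicalSpace X] [Finite ι] [Infinite κ]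
    {P : ι → Set X} (hP : ∀ i, IsClosed (P i)) (hfin : Pairwise fun i j => (P i ∩ P j).Finite)
    {f : κ → X → ℂ} (hf : ∀ k i, HasLogOn (f k) (P i)) :
    ∃ (s : Finset κ) (c : κ → ℤ), (∃ k ∈ s, c k ≠ 0) ∧
      HasLogOn (fun z => ∏ k ∈ s, f k z ^ c k) (⋃ i, P i) := by
  choose a hac ha using hf
  have := (finite_setOf_mem_pairwise_inter hfin).to_subtype
  obtain ⟨s, c, hc0, hc⟩ := exists_sum_mul_intCast_eq_zero
    (fun k (w : {w : ι × ι × X | w.1 ≠ w.2.1 ∧ w.2.2 ∈ P w.1 ∩ P w.2.1}) =>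
      a k w.1.1 w.1.2.2 - a k w.1.2.1 w.1.2.2) (2 * Real.pi * Complex.I) (by
    rintro k ⟨⟨i, j, z⟩, -, hi, hj⟩
    obtain ⟨m, hm⟩ := Complex.exp_eq_exp_iff_exists_int.1 ((ha k i hi).trans (ha k j hj).symm)
    exact ⟨m, sub_eq_iff_eq_add'.2 hm⟩)
  obtain ⟨g, hgc, hg⟩ := exists_continuousOn_iUnion hP (b := fun i z => ∑ k ∈ s, c k * a k i z)
    (fun i => continuousOn_finsetSum _ fun k _ => continuousOn_const.mul (hac k i)) (by
    intro i j z hz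
    obtain rfl | hij := eq_or_ne i j
    · rfl
    · simpa only [mul_sub, Finset.sum_sub_distrib, sub_eq_zero] using hc ⟨(i, j, z), hij, hz⟩)
  refine ⟨s, c, hc0, g, hgc, fun z hz => ?_⟩
  obtain ⟨i, hi⟩ := mem_iUnion.1 hz
  simp only [Function.comp_apply, hg i hi, Complex.exp_sum, Complex.exp_int_mul]
  exact Finset.prod_congr rfl fun k _ => congrArg (· ^ c k) (ha k i hi)

/-! ### Local sectors -/

lemma finite_image_connectedComponentIn_compl {ι : Type*} [Finite ι] {P : ι → Set ℂ}
    (hP : ∀ i, IsClosed (P i)) (hfin : Pairwise fun i j => (P i ∩ P j).Finite) {S : Set ℂ}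
    (hS : Disjoint S (⋃ i, P i))
    (hb : ∀ x ∈ S, Bornology.IsBounded (connectedComponentIn (⋃ i, P i)ᶜ x))
    (hlog : ∀ x ∈ S, ∀ y ∈ S, ∀ i, HasLogOn (fun z => (z - x) / (z - y)) (P i)) :
    (connectedComponentIn (⋃ i, P i)ᶜ '' S).Finite := by
  by_contra hinf
  have hinf : (connectedComponentIn (⋃ i, P i)ᶜ '' S).Infinite := hinf
  let e := hinf.natEmbedding
  choose x hxS hx using fun n => (e n).2
  have hxK : ∀ n, x n ∉ ⋃ i, P i := fun n => disjoint_left.1 hS (hxS n)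
  have hdistinct : ∀ m n, m ≠ n → x m ∉ connectedComponentIn (⋃ i, P i)ᶜ (x n) := by
    intro m n hmn h
    exact hmn (e.injective (Subtype.ext (by rw [← hx, ← hx, connectedComponentIn_eq h])))
  obtain ⟨s, c, ⟨k, hk, hck⟩, hc⟩ := exists_hasLogOn_iUnion_prod_zpow hP hfin
    (f := fun n z => (z - x (n + 1)) / (z - x 0)) fun n => hlog _ (hxS _) _ (hxS 0)
  exact hck <| eilenberg_criterion (isClosed_iUnion_of_finite hP) hk (x := fun n => x (n + 1))
    (fun _ _ => hxK _) (hxK 0) (fun l _ hl => hdistinct _ _ (by omega))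
    (hdistinct _ _ (by omega)) (hb _ (hxS _)) hc

lemma hasLogOn_sub_div_sub {S : Set ℂ} {x y : ℂ} (h : ∀ z ∈ S, dist x y < dist z y) :
    HasLogOn (fun z => (z - x) / (z - y)) S := by
  have hy : ∀ z ∈ S, z - y ≠ 0 := fun z hz =>
    sub_ne_zero.2 (dist_pos.1 (dist_nonneg.trans_lt (h z hz)))
  have hslit : ∀ z ∈ S, (z - x) / (z - y) ∈ Complex.slitPlane := by
    intro z hz
    have hsplit : (z - x) / (z - y) = 1 + (y - x) / (z - y) := by
      field_simp [hy z hz]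
      ring
    rw [hsplit]
    refine Complex.mem_slitPlane_of_norm_lt_one ?_
    rw [norm_div, div_lt_one (norm_pos_iff.2 (hy z hz)), ← dist_eq_norm, ← dist_eq_norm, dist_comm]
    exact h z hz
  exact ⟨fun z => Complex.log ((z - x) / (z - y)),
    (ContinuousOn.div (by fun_prop) (by fun_prop) hy).clog hslit,
    fun z hz => Complex.exp_log (Complex.slitPlane_ne_zero (hslit z hz))⟩

lemma HasAllLogs.sub_div_sub {S : Set ℂ} (hS : HasAllLogs S) {x y : ℂ} (hx : x ∉ S) (hy : y ∉ S) :
    HasLogOn (fun z => (z - x) / (z - y)) S := by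
  have hne : ∀ w ∉ S, ∀ z ∈ S, z - w ≠ 0 := fun w hw z hz =>
    sub_ne_zero.2 (ne_of_mem_of_not_mem hz hw)
  exact hS _ (ContinuousOn.div (by fun_prop) (by fun_prop) (hne y hy))
    fun z hz => div_ne_zero (hne x hx z hz) (hne y hy z hz)

lemma connectedComponentIn_ball_diff {X : Type*} [PseudoMetricSpace X] (K : Set X) {p x : X} {ε : ℝ}
    (hx : x ∈ Metric.ball p ε \ K) :
    connectedComponentIn (Metric.ball p ε \ K) x =
      connectedComponentIn (Metric.sphere p ε ∪ K)ᶜ x := by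
  have hsub : Metric.ball p ε \ K ⊆ (Metric.sphere p ε ∪ K)ᶜ := by
    rintro z ⟨hz, hzK⟩ (hz' | hz')
    · exact hz.ne hz'
    · exact hzK hz'
  refine (connectedComponentIn_mono x hsub).antisymm <|
    isPreconnected_connectedComponentIn.subset_connectedComponentIn
      (mem_connectedComponentIn (hsub hx)) (subset_sdiff.2 ⟨?_, ?_⟩)
  · refine isPreconnected_connectedComponentIn.subset_left_of_subset_union
      Metric.isOpen_ball Metric.isClosed_closedBall.isOpen_compl
      (disjoint_compl_right_iff_subset.2 Metric.ball_subset_closedBall) (fun z hz => ?_)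
      ⟨x, mem_connectedComponentIn (hsub hx), hx.1⟩
    have hz' : dist z p ≠ ε := fun h => connectedComponentIn_subset _ _ hz (Or.inl h)
    exact hz'.lt_or_gt.imp id fun h h' => not_le.2 h h'
  · exact disjoint_left.2 fun z hz hzK => connectedComponentIn_subset _ _ hz (Or.inr hzK)

lemma ball_diff_sphere_union {X : Type*} [PseudoMetricSpace X] (K : Set X) {p : X} {δ ε : ℝ}
    (hδ : δ ≤ ε) : Metric.ball p δ \ (Metric.sphere p ε ∪ K) = Metric.ball p δ \ K := by
  have hdisj : Disjoint (Metric.ball p δ) (Metric.sphere p ε) :=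
    disjoint_left.2 fun z hz => (Metric.ball_subset_ball hδ hz).ne
  rw [← sdiff_sdiff, hdisj.sdiff_eq_left]

/-- Around every point `p`, the set `A` splits into a closed part missing `p` and an arbitrarily
small closed part on which all logarithms exist, the two parts having finite intersection. This is
the only property of arcs that the finiteness of sectors depends on. -/
def HasLocalLogSplittings {X : Type*} [TopologicalSpace X] (A : Set X) : Prop :=
  ∀ p, ∀ N ∈ nhds p, ∃ M Q : Set X, IsClosed M ∧ IsClosed Q ∧ M ∪ Q = A ∧ p ∉ M ∧ Q ⊆ N ∧
    (M ∩ Q).Finite ∧ HasAllLogs Q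

/-- `p` has arbitrarily small open neighbourhoods `N` such that only finitely many components of
`N \ K` come arbitrarily close to `p`. -/
def HasFinitelyManySectorsAt {X : Type*} [TopologicalSpace X] (K : Set X) (p : X) : Prop :=
  ∀ W ∈ nhds p, ∃ N ⊆ W, IsOpen N ∧ p ∈ N ∧
    ∃ M ∈ nhds p, (connectedComponentIn (N \ K) '' (M \ K)).Finite

lemma exists_finite_image_connectedComponentIn_compl {ι : Type*} [Finite ι] {L K : Set ℂ}
    {Q : ι → Set ℂ} (hK : L ∪ ⋃ i, Q i = K) (hL : IsClosed L) (hQ : ∀ i, IsClosed (Q i))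
    (hlog : ∀ i, HasAllLogs (Q i)) (hLQ : ∀ i, (L ∩ Q i).Finite)
    (hQQ : Pairwise fun i j => (Q i ∩ Q j).Finite) {p : ℂ} (hp : p ∉ L) {ε : ℝ} (hε : 0 < ε)
    (hb : ∀ x ∈ Metric.ball p ε \ K, Bornology.IsBounded (connectedComponentIn Kᶜ x)) :
    ∃ δ > 0, δ ≤ ε ∧ (connectedComponentIn Kᶜ '' (Metric.ball p δ \ K)).Finite := by
  obtain ⟨d, hd0, hd⟩ := Metric.isOpen_iff.1 hL.isOpen_compl p hp
  let P : Option ι → Set ℂ := fun o => o.elim L Q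
  have hP : ∀ o, IsClosed (P o) := by
    rintro (_ | i)
    exacts [hL, hQ i]
  have hPP : Pairwise fun o o' => (P o ∩ P o').Finite := by
    rintro (_ | i) (_ | j) hij
    · exact absurd rfl hij
    · exact hLQ j
    · exact inter_comm L (Q i) ▸ hLQ i
    · exact hQQ fun h => hij (congrArg some h)
  obtain rfl : ⋃ o, P o = K := (iUnion_option P).trans hK
  refine ⟨min (d / 3) ε, by positivity, min_le_right _ _, ?_⟩
  refine finite_image_connectedComponentIn_compl hP hPP disjoint_sdiff_left (fun x hx =>
    hb x ⟨Metric.ball_subset_ball (min_le_right _ _) hx.1, hx.2⟩) ?_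
  rintro x ⟨hx, hxP⟩ y ⟨hy, hyP⟩ (_ | i)
  · refine hasLogOn_sub_div_sub fun z hz => ?_
    have hzd : d ≤ dist z p := not_lt.1 fun h => hd h hz
    have hxd : dist x p < d / 3 := hx.trans_le (min_le_left _ _)
    have hyd : dist y p < d / 3 := hy.trans_le (min_le_left _ _)
    linarith [dist_triangle z y p, dist_triangle_right x y p]
  · exact (hlog i).sub_div_sub (fun h => hxP (mem_iUnion.2 ⟨some i, h⟩))
      fun h => hyP (mem_iUnion.2 ⟨some i, h⟩)

lemma hasFinitelyManySectorsAt_iUnion {ι : Type*} [Finite ι] {A : ι → Set ℂ}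
    (hA : ∀ i, HasLocalLogSplittings (A i)) (hfin : Pairwise fun i j => (A i ∩ A j).Finite)
    (p : ℂ) : HasFinitelyManySectorsAt (⋃ i, A i) p := by
  intro W hW
  obtain ⟨ε, hε, hεW⟩ := Metric.mem_nhds_iff.1 hW
  choose M Q hM hQ hMQ hp hQε hMQfin hlog using fun i => hA i p _ (Metric.ball_mem_nhds p hε)
  have hMA : ∀ i, M i ⊆ A i := fun i => hMQ i ▸ subset_union_left
  have hQA : ∀ i, Q i ⊆ A i := fun i => hMQ i ▸ subset_union_right
  have hMQfin' : ∀ j i, (M j ∩ Q i).Finite := by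
    intro j i
    obtain rfl | hij := eq_or_ne j i
    · exact hMQfin j
    · exact (hfin hij).subset (inter_subset_inter (hMA j) (hQA i))
  have hLQ : ∀ i, ((Metric.sphere p ε ∪ ⋃ j, M j) ∩ Q i).Finite := by
    intro i
    refine (finite_iUnion fun j => hMQfin' j i).subset ?_
    rintro z ⟨hz | hz, hzQ⟩
    · exact absurd hz (hQε i hzQ).ne
    · rw [← iUnion_inter]
      exact ⟨hz, hzQ⟩
  have hK : (Metric.sphere p ε ∪ ⋃ i, M i) ∪ ⋃ i, Q i = Metric.sphere p ε ∪ ⋃ i, A i := by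
    rw [union_assoc, ← iUnion_union_distrib, iUnion_congr hMQ]
  obtain ⟨δ, hδ, hδε, hfinite⟩ := exists_finite_image_connectedComponentIn_compl hK
    (Metric.isClosed_sphere.union (isClosed_iUnion_of_finite hM)) hQ hlog hLQ
    (fun i j hij => (hfin hij).subset (inter_subset_inter (hQA i) (hQA j)))
    (p := p) (by simpa [hε.ne] using hp) hε (by
      intro x hx
      rw [ball_diff_sphere_union _ le_rfl] at hx
      rw [← connectedComponentIn_ball_diff _ hx]
      exact Metric.isBounded_ball.subset ((connectedComponentIn_subset _ _).trans sdiff_subset))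
  rw [ball_diff_sphere_union _ hδε] at hfinite
  refine ⟨_, hεW, Metric.isOpen_ball, Metric.mem_ball_self hε, _, Metric.ball_mem_nhds p hδ, ?_⟩
  rwa [image_congr fun x hx => connectedComponentIn_ball_diff _
    (sdiff_subset_sdiff_left (Metric.ball_subset_ball hδε) hx)]

lemma hasLocalLogSplittings_singleton {X : Type*} [TopologicalSpace X] [T1Space X] (x : X) :
    HasLocalLogSplittings {x} := by
  intro p N hN
  obtain rfl | hpx := eq_or_ne p x
  · exact ⟨∅, {p}, isClosed_empty, isClosed_singleton, empty_union _, notMem_empty p,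
      singleton_subset_iff.2 (mem_of_mem_nhds hN), by simp, .singleton p⟩
  · exact ⟨{x}, ∅, isClosed_singleton, isClosed_empty, union_empty _, hpx, empty_subset N, by simp,
      .empty⟩

lemma hasLocalLogSplittings_range {X : Type*} [TopologicalSpace X] [T2Space X] {x y : X}
    {γ : Path x y} (hγ : Function.Injective γ) : HasLocalLogSplittings (range γ) := by
  have hemb : Topology.IsClosedEmbedding γ := γ.continuous.isClosedEmbedding hγ
  intro p N hN
  by_cases hp : p ∈ range γ
  · obtain ⟨t, rfl⟩ := hp
    obtain ⟨a, b, htab, habt, hab⟩ :=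
      exists_Icc_mem_subset_of_mem_nhds (γ.continuous.continuousAt hN)
    have hle : a ≤ b := htab.1.trans htab.2
    refine ⟨γ '' (interior (Icc a b))ᶜ, γ '' Icc a b,
      hemb.isClosedMap _ isOpen_interior.isClosed_compl,
      hemb.isClosedMap _ isClosed_Icc, ?_, ?_, image_subset_iff.2 hab, ?_, ?_⟩
    · rw [← image_union, ← image_univ]
      refine congrArg _ (eq_univ_of_forall fun u => ?_)
      exact (em (u ∈ Icc a b)).symm.imp (fun h h' => h (interior_subset h')) id
    · rintro ⟨u, hu, hut⟩
      exact hu (hγ hut ▸ mem_interior_iff_mem_nhds.2 habt)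
    · rw [← image_inter hγ, inter_comm, ← sdiff_eq]
      refine ((toFinite {a, b}).subset ?_).image γ
      rw [← Icc_sdiff_Ioo_same hle]
      exact sdiff_subset_sdiff_right (interior_maximal Ioo_subset_Icc_self isOpen_Ioo)
    · exact (hasAllLogs_Icc hle).image hemb.isEmbedding
  · exact ⟨range γ, ∅, hemb.isClosed_range, isClosed_empty, union_empty _, hp, empty_subset N,
      by simp, .empty⟩

/-! ### Arcs -/

section Arcs

open unitInterval Topology Filter

variable {X : Type*} [TopologicalSpace X] {S T : Set X} {x y z : X}

/-- `x` and `y` are the endpoints of an arc, i.e. of an injective path, contained in `S`. -/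
def ArcJoinedIn (S : Set X) (x y : X) : Prop :=
  ∃ γ : Path x y, Function.Injective γ ∧ range γ ⊆ S

lemma ArcJoinedIn.mono (h : ArcJoinedIn S x y) (hST : S ⊆ T) : ArcJoinedIn T x y :=
  let ⟨γ, hγ, hγS⟩ := h
  ⟨γ, hγ, hγS.trans hST⟩

lemma ArcJoinedIn.symm (h : ArcJoinedIn S x y) : ArcJoinedIn S y x := by
  obtain ⟨γ, hγ, hγS⟩ := h
  exact ⟨γ.symm, hγ.comp unitInterval.symm_bijective.injective, by rwa [γ.symm_range]⟩

lemma arcJoinedIn_image_uIcc {γ : Path x y} (hγ : Function.Injective γ) {s t : I} (hst : s ≠ t) :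
    ArcJoinedIn (γ '' uIcc s t) (γ s) (γ t) := by
  refine ⟨γ.subpath s t, hγ.comp fun u v huv => ?_, (γ.range_subpath s t).subset⟩
  have hcoe : (1 - u : ℝ) * s + u * t = (1 - v) * s + v * t := congrArg Subtype.val huv
  have hmul : (u - v : ℝ) * (t - s) = 0 := by linear_combination hcoe
  have hts : (t - s : ℝ) ≠ 0 := sub_ne_zero.2 fun h => hst (Subtype.ext h.symm)
  exact Subtype.ext (sub_eq_zero.1 ((mul_eq_zero.1 hmul).resolve_right hts))

lemma ArcJoinedIn.trans_of_inter_subset (hS : ArcJoinedIn S x y) (hT : ArcJoinedIn T y z)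
    (hST : S ∩ T ⊆ {y}) : ArcJoinedIn (S ∪ T) x z := by
  obtain ⟨γ, hγ, hγS⟩ := hS
  obtain ⟨η, hη, hηT⟩ := hT
  have hmeet : ∀ s t, γ s = η t → (s : ℝ) = 1 ∧ (t : ℝ) = 0 := fun s t hst => by
    have hy : γ s = y := hST ⟨hγS (mem_range_self s), hst ▸ hηT (mem_range_self t)⟩
    rw [hγ (hy.trans γ.target.symm), hη ((hst.symm.trans hy).trans η.source.symm)]
    exact ⟨rfl, rfl⟩
  refine ⟨γ.trans η, fun s t hst => Subtype.ext ?_, ?_⟩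
  · simp only [Path.trans_apply] at hst
    split_ifs at hst with hs ht ht
    · linarith [congrArg Subtype.val (hγ hst)]
    · linarith [(hmeet _ _ hst).2]
    · linarith [(hmeet _ _ hst.symm).2]
    · linarith [congrArg Subtype.val (hη hst)]
  · rw [Path.trans_range]
    exact union_subset_union hγS hηT

lemma exists_first_mem {γ : Path x y} {C : Set X} (hC : IsClosed C) (s : I)
    (h : ∃ t ≥ s, γ t ∈ C) : ∃ t ≥ s, γ t ∈ C ∧ ∀ u, s ≤ u → γ u ∈ C → t ≤ u := by
  have hcompact : IsCompact (Ici s ∩ γ ⁻¹' C) :=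
    (isClosed_Ici.inter (hC.preimage γ.continuous)).isCompact
  obtain ⟨t, ⟨hst, htC⟩, hmin⟩ := hcompact.exists_isLeast h
  exact ⟨t, hst, htC, fun u hsu huC => hmin ⟨hsu, huC⟩⟩

lemma ArcJoinedIn.trans [T2Space X] (hxy : ArcJoinedIn S x y) (hyz : ArcJoinedIn S y z)
    (hxz : x ≠ z) : ArcJoinedIn S x z := by
  obtain ⟨γ, hγ, hγS⟩ := hxy
  obtain ⟨η, hη, hηS⟩ := hyz
  obtain ⟨t, -, ⟨s, hst⟩, hmin⟩ := exists_first_mem (γ := γ)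
    (isCompact_range η.continuous).isClosed 0 ⟨1, zero_le_one, 0, by simp⟩
  have hhead : t ≠ 0 → ArcJoinedIn (γ '' uIcc 0 t) x (γ t) := fun ht => by
    simpa using arcJoinedIn_image_uIcc hγ ht.symm
  have htail : s ≠ 1 → ArcJoinedIn (η '' uIcc s 1) (γ t) z := fun hs => by
    simpa [hst] using arcJoinedIn_image_uIcc hη hs
  have hγS' := (image_subset_range γ (uIcc 0 t)).trans hγS
  have hηS' := (image_subset_range η (uIcc s 1)).trans hηS
  rcases eq_or_ne t 0 with rfl | ht
  · rw [γ.source] at hst htail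
    exact (htail fun hs => hxz (by rw [← hst, hs, η.target])).mono hηS'
  rcases eq_or_ne s 1 with rfl | hs
  · rw [← hst, η.target] at hhead
    exact (hhead ht).mono hγS'
  refine ((hhead ht).trans_of_inter_subset (htail hs) ?_).mono (union_subset hγS' hηS')
  rintro _ ⟨⟨u, hu, rfl⟩, v, -, huv⟩
  rw [uIcc_of_le unitInterval.nonneg'] at hu
  rw [hu.2.antisymm (hmin u hu.1 ⟨v, huv⟩), mem_singleton_iff]

lemma arcJoinedIn_segment {E : Type*} [AddCommGroup E] [Module ℝ E] [TopologicalSpace E]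
    [IsTopologicalAddGroup E] [ContinuousSMul ℝ E] {x y : E} (hxy : x ≠ y) :
    ArcJoinedIn (segment ℝ x y) x y := by
  refine ⟨⟨⟨fun t => AffineMap.lineMap x y (t : ℝ), ?_⟩, by simp, by simp⟩,
    (AffineMap.lineMap_injective ℝ hxy).comp Subtype.val_injective, ?_⟩
  · simp only [AffineMap.lineMap_apply_module]
    fun_prop
  · rintro _ ⟨t, rfl⟩
    exact segment_eq_image_lineMap ℝ x y ▸ mem_image_of_mem _ t.2

lemma arcJoinedIn_of_isOpen_isPreconnected {E : Type*} [NormedAddCommGroup E] [NormedSpace ℝ E]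
    {U : Set E} (hU : IsOpen U) (hc : IsPreconnected U) {x y : E} (hx : x ∈ U) (hy : y ∈ U)
    (hxy : x ≠ y) : ArcJoinedIn U x y := by
  suffices x = y ∨ ArcJoinedIn U x y from this.resolve_left hxy
  refine hc.induction₂' (fun x y => x = y ∨ ArcJoinedIn U x y) (fun x hx => ?_) ?_ hx hy
  · obtain ⟨ε, hε, hball⟩ := Metric.isOpen_iff.1 hU x hx
    filter_upwards [mem_nhdsWithin_of_mem_nhds (Metric.ball_mem_nhds x hε)] with y hy
    rcases eq_or_ne x y with rfl | hxy
    · exact ⟨Or.inl rfl, Or.inl rfl⟩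
    have harc : ArcJoinedIn U x y := (arcJoinedIn_segment hxy).mono
      (((convex_ball x ε).segment_subset (Metric.mem_ball_self hε) hy).trans hball)
    exact ⟨Or.inr harc, Or.inr harc.symm⟩
  · rintro x y z - - - (rfl | hxy) (rfl | hyz)
    · exact Or.inl rfl
    · exact Or.inr hyz
    · exact Or.inr hxy
    · exact (eq_or_ne x z).imp_right (hxy.trans hyz)

lemma arcJoinedIn_insert_of_tendsto {Γ : ℝ → X} {p : X} (hc : ContinuousOn Γ (Ici 0))
    (hinj : InjOn Γ (Ici 0)) (hlim : Tendsto Γ atTop (𝓝 p)) (hp : p ∉ Γ '' Ici 0) :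
    ArcJoinedIn (insert p (Γ '' Ici 0)) p (Γ 0) := by
  set f : I → X := Function.update (fun t => Γ ((t : ℝ)⁻¹ - 1)) 0 p
  have hmaps : ∀ t : I, t ≠ 0 → (t : ℝ)⁻¹ - 1 ∈ Ici (0 : ℝ) := fun t ht =>
    sub_nonneg.2 ((one_le_inv₀ (unitInterval.pos_iff_ne_zero.2 ht)).2 t.2.2)
  have hf0 : f 0 = p := Function.update_self ..
  have hf : ∀ t ≠ 0, f t = Γ ((t : ℝ)⁻¹ - 1) := fun t ht => Function.update_of_ne ht ..
  have hfp : ∀ t ≠ 0, f t ≠ p := fun t ht h => hp ⟨_, hmaps t ht, (hf t ht).symm.trans h⟩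
  have hcont : Continuous f := continuous_iff_continuousAt.2 fun t => by
    rcases eq_or_ne t 0 with rfl | ht
    · refine continuousAt_update_same.2 (hlim.comp (tendsto_atTop_add_const_right _ _ ?_))
      refine tendsto_inv_nhdsGT_zero.comp (tendsto_nhdsWithin_iff.2 ⟨?_, ?_⟩)
      · exact (continuous_subtype_val.tendsto (0 : I)).mono_left nhdsWithin_le_nhds
      · exact eventually_nhdsWithin_of_forall fun t ht => unitInterval.pos_iff_ne_zero.2 ht
    · refine (continuousAt_update_of_ne ht).2 (ContinuousOn.continuousAt (s := {0}ᶜ) ?_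
        (isOpen_compl_singleton.mem_nhds ht))
      refine hc.comp (ContinuousOn.sub (ContinuousOn.inv₀ (by fun_prop) ?_) continuousOn_const)
        hmaps
      exact fun s hs h => hs (Subtype.ext h)
  refine ⟨⟨⟨f, hcont⟩, hf0, by simp [hf 1 one_ne_zero]⟩, fun s t hst => ?_, ?_⟩
  · change f s = f t at hst
    rcases eq_or_ne s 0 with rfl | hs <;> rcases eq_or_ne t 0 with rfl | ht
    · rfl
    · exact absurd (hst.symm.trans hf0) (hfp t ht)
    · exact absurd (hst.trans hf0) (hfp s hs)
    · rw [hf s hs, hf t ht] at hst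
      exact Subtype.ext (inv_injective (sub_left_injective (hinj (hmaps s hs) (hmaps t ht) hst)))
  · rintro _ ⟨t, rfl⟩
    rcases eq_or_ne t 0 with rfl | ht
    · exact Or.inl hf0
    · exact Or.inr ⟨_, hmaps t ht, (hf t ht).symm⟩

/-- The infinite concatenation of the paths `γ 0`, `γ 1`, …, with `γ n` traversed on the interval
`[n, n + 1]`; it is constant on `(-∞, 0]`. -/
noncomputable def rayConcat {x : ℕ → X} (γ : ∀ n, Path (x n) (x (n + 1))) (τ : ℝ) : X :=
  (γ ⌊τ⌋₊).extend (τ - ⌊τ⌋₊)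

section rayConcat

variable {x : ℕ → X} (γ : ∀ n, Path (x n) (x (n + 1)))

lemma sub_natFloor_mem_Ico {τ : ℝ} (hτ : 0 ≤ τ) : τ - ⌊τ⌋₊ ∈ Ico (0 : ℝ) 1 :=
  ⟨sub_nonneg.2 (Nat.floor_le hτ), sub_lt_iff_lt_add'.2 (Nat.lt_floor_add_one τ)⟩

lemma rayConcat_of_mem_Icc {n : ℕ} {τ : ℝ} (hτ : τ ∈ Icc (n : ℝ) (n + 1)) :
    rayConcat γ τ = (γ n).extend (τ - n) := by
  rcases hτ.2.eq_or_lt with rfl | hlt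
  · have hfloor : ⌊(n + 1 : ℝ)⌋₊ = n + 1 := mod_cast Nat.floor_natCast (R := ℝ) (n + 1)
    simp [rayConcat, hfloor]
  · rw [rayConcat, (Nat.floor_eq_iff (n.cast_nonneg.trans hτ.1)).2 ⟨hτ.1, hlt⟩]

lemma continuous_rayConcat : Continuous (rayConcat γ) := by
  have hIic : ∀ n : ℕ, ContinuousOn (rayConcat γ) (Iic n) := fun n => by
    induction n with
    | zero =>
      refine continuousOn_const (c := x 0) |>.congr fun τ hτ => ?_
      have hτ' : τ ≤ 0 := by simpa using hτ
      rw [rayConcat, Nat.floor_of_nonpos hτ', Nat.cast_zero, sub_zero, Path.extend_of_le_zero _ hτ']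
    | succ n ih =>
      have hIcc : ContinuousOn (rayConcat γ) (Icc n (n + 1)) :=
        ((γ n).continuous_extend.comp (continuous_sub_right (n : ℝ))).continuousOn.congr
          fun τ hτ => rayConcat_of_mem_Icc γ hτ
      rw [Nat.cast_succ, ← Iic_union_Icc_eq_Iic (le_add_of_nonneg_right (zero_le_one' ℝ))]
      exact ih.union_of_isClosed hIcc isClosed_Iic isClosed_Icc
  refine continuous_iff_continuousAt.2 fun τ => ?_
  obtain ⟨n, hn⟩ := exists_nat_gt τ
  exact (hIic n).continuousAt (Iic_mem_nhds hn)

variable {γ}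

lemma rayConcat_mem_range {τ : ℝ} (hτ : 0 ≤ τ) : rayConcat γ τ ∈ range (γ ⌊τ⌋₊) := by
  rw [rayConcat, Path.extend_apply _ (Ico_subset_Icc_self (sub_natFloor_mem_Ico hτ))]
  exact mem_range_self _

lemma injOn_rayConcat (hγ : ∀ n, Function.Injective (γ n))
    (hdisj : ∀ n m, n < m → range (γ n) ∩ range (γ m) ⊆ {x (n + 1)}) :
    InjOn (rayConcat γ) (Ici 0) := by
  have hne : ∀ ρ ∈ Ici (0 : ℝ), ∀ τ ∈ Ici (0 : ℝ), ρ < τ → rayConcat γ ρ ≠ rayConcat γ τ := by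
    intro ρ hρ τ hτ hlt heq
    have hρI := Ico_subset_Icc_self (sub_natFloor_mem_Ico hρ)
    have hργ : rayConcat γ ρ = γ ⌊ρ⌋₊ ⟨_, hρI⟩ := Path.extend_apply _ hρI
    rcases (Nat.floor_le_floor hlt.le).eq_or_lt with hfloor | hfloor
    · have hτI := Ico_subset_Icc_self (sub_natFloor_mem_Ico hτ)
      rw [← hfloor] at hτI
      have hτγ : rayConcat γ τ = γ ⌊ρ⌋₊ ⟨_, hτI⟩ := by
        rw [rayConcat, ← hfloor, Path.extend_apply _ hτI]
      have := congrArg Subtype.val (hγ _ (hργ.symm.trans (heq.trans hτγ)))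
      linarith
    · have hend : rayConcat γ ρ = x (⌊ρ⌋₊ + 1) :=
        hdisj _ _ hfloor ⟨rayConcat_mem_range hρ, heq ▸ rayConcat_mem_range hτ⟩
      have hone := hγ _ ((hργ.symm.trans hend).trans (γ ⌊ρ⌋₊).target.symm)
      exact (sub_natFloor_mem_Ico hρ).2.ne (congrArg Subtype.val hone)
  intro ρ hρ τ hτ heq
  by_contra h
  rcases lt_or_gt_of_ne h with hlt | hlt
  · exact hne ρ hρ τ hτ hlt heq
  · exact hne τ hτ ρ hρ hlt heq.symm

end rayConcat

lemma arcJoinedIn_insert_iUnion {B : ℕ → Set X} {x : ℕ → X} {p : X}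
    (hB : ∀ n, ArcJoinedIn (B n) (x n) (x (n + 1)))
    (hdisj : ∀ n m, n < m → B n ∩ B m ⊆ {x (n + 1)})
    (hlim : Tendsto B atTop (𝓝 p).smallSets) (hp : ∀ n, p ∉ B n) :
    ArcJoinedIn (insert p (⋃ n, B n)) p (x 0) := by
  choose γ hγ hγB using hB
  have hmem : ∀ τ ≥ 0, rayConcat γ τ ∈ B ⌊τ⌋₊ := fun τ hτ => hγB _ (rayConcat_mem_range hτ)
  have hstart : rayConcat γ 0 = x 0 := by simp [rayConcat]
  have hinj := injOn_rayConcat hγ fun n m hnm =>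
    (inter_subset_inter (hγB n) (hγB m)).trans (hdisj n m hnm)
  have htendsto : Tendsto (rayConcat γ) atTop (𝓝 p) := fun O hO => by
    have hO' : ∀ᶠ τ : ℝ in atTop, B ⌊τ⌋₊ ⊆ O :=
      tendsto_nat_floor_atTop.eventually (tendsto_smallSets_iff.1 hlim O hO)
    rw [mem_map]
    filter_upwards [hO', eventually_ge_atTop 0] with τ hτO hτ using hτO (hmem τ hτ)
  rw [← hstart]
  refine (arcJoinedIn_insert_of_tendsto (continuous_rayConcat γ).continuousOn hinj htendsto
    ?_).mono (insert_subset_insert ?_)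
  · rintro ⟨τ, hτ, rfl⟩
    exact hp _ (hmem τ hτ)
  · rintro _ ⟨τ, hτ, rfl⟩
    exact mem_iUnion_of_mem _ (hmem τ hτ)

-- Each arc is cut at its first point on the next one, which is then entered at that point.
lemma exists_arcJoinedIn_seq_inter_subset [T2Space X] {x : ℕ → X}
    (γ : ∀ n, Path (x n) (x (n + 1))) (hγ : ∀ n, Function.Injective (γ n))
    (hstart : x 0 ∉ range (γ 1))
    (hdisj : ∀ n m, n + 2 ≤ m → Disjoint (range (γ n)) (range (γ m))) :
    ∃ (B : ℕ → Set X) (y : ℕ → X), y 0 = x 0 ∧ (∀ n, ArcJoinedIn (B n) (y n) (y (n + 1))) ∧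
      (∀ n, B n ⊆ range (γ n)) ∧ ∀ n m, n < m → B n ∩ B m ⊆ {y (n + 1)} := by
  have hcut : ∀ n (s : I), ∃ t ≥ s, ∃ s', γ (n + 1) s' = γ n t ∧
      ∀ u, s ≤ u → γ n u ∈ range (γ (n + 1)) → t ≤ u := fun n s => by
    obtain ⟨t, hst, ⟨s', hs'⟩, hmin⟩ := exists_first_mem (γ := γ n)
      (isCompact_range (γ (n + 1)).continuous).isClosed s ⟨1, s.2.2, 0, by simp⟩
    exact ⟨t, hst, s', hs', hmin⟩
  choose exit hle entry hentry hfirst using hcut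
  set s : ℕ → I := fun n => Nat.rec 0 entry n
  set t : ℕ → I := fun n => exit n (s n)
  have hst : ∀ n, γ (n + 1) (s (n + 1)) = γ n (t n) := fun n => hentry n (s n)
  have hne : ∀ n, s n ≠ t n := fun n hn => by
    have hmem : γ n (s n) ∈ range (γ (n + 1)) := by
      rw [hn, ← hst]
      exact mem_range_self _
    cases n with
    | zero => exact hstart (by simpa [s] using hmem)
    | succ n =>
      rw [hst] at hmem
      exact (hdisj n (n + 2) le_rfl).notMem_of_mem_left (mem_range_self _) hmem
  refine ⟨fun n => γ n '' Icc (s n) (t n), fun n => γ n (s n), by simp [s], fun n => ?_,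
    fun n => image_subset_range _ _, fun n m hnm => ?_⟩
  · have harc := arcJoinedIn_image_uIcc (hγ n) (hne n)
    rwa [uIcc_of_le (hle n (s n)), ← hst] at harc
  · rintro _ ⟨⟨u, hu, rfl⟩, v, -, huv⟩
    have hmem : γ n u ∈ range (γ m) := huv ▸ mem_range_self v
    obtain rfl | hm : m = n + 1 ∨ n + 2 ≤ m := by lia
    · change γ n u = γ (n + 1) (s (n + 1))
      rw [hst, hu.2.antisymm (hfirst n _ u hu.1 hmem)]
    · exact absurd hmem ((hdisj n m hm).notMem_of_mem_left (mem_range_self u))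

end Arcs

/-! ### Accessibility of boundary points -/

section Accessibility

open Topology Filter

lemma HasFinitelyManySectorsAt.preimage {X Y : Type*} [TopologicalSpace X] [TopologicalSpace Y]
    (e : X ≃ₜ Y) {K : Set Y} {p : X} (h : HasFinitelyManySectorsAt K (e p)) :
    HasFinitelyManySectorsAt (e ⁻¹' K) p := by
  intro W hW
  obtain ⟨N, hNW, hN, hpN, M, hM, hfin⟩ := h (e '' W) (e.isOpenMap.image_mem_nhds hW)
  refine ⟨e ⁻¹' N, (preimage_mono hNW).trans (preimage_image_eq W e.injective).subset,
    hN.preimage e.continuous, hpN, e ⁻¹' M, e.continuous.continuousAt hM, ?_⟩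
  refine Finite.of_finite_image (hfin.subset ?_) (image_injective.2 e.injective).injOn
  rintro _ ⟨_, ⟨x, hx, rfl⟩, rfl⟩
  refine ⟨e x, hx, ?_⟩
  by_cases hxN : e x ∈ N \ K
  · rw [e.image_connectedComponentIn (s := e ⁻¹' N \ e ⁻¹' K) hxN, ← preimage_sdiff,
      e.image_preimage]
  · have hxN' : x ∉ e ⁻¹' N \ e ⁻¹' K := hxN
    rw [connectedComponentIn_eq_empty hxN, connectedComponentIn_eq_empty hxN', image_empty]

section Sectors

variable {X : Type*} [TopologicalSpace X] {K U W : Set X} {p : X}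

/-- `U` is a component of `N \ K` for some open neighbourhood `N` of `p`, and `p` is a limit of
points of `U`. -/
def IsSectorAt (K : Set X) (p : X) (U : Set X) : Prop :=
  p ∈ closure U ∧ ∃ N, IsOpen N ∧ p ∈ N ∧ ∃ x ∈ N \ K, U = connectedComponentIn (N \ K) x

lemma IsSectorAt.isPreconnected (hU : IsSectorAt K p U) : IsPreconnected U := by
  obtain ⟨-, N, -, -, x, -, rfl⟩ := hU
  exact isPreconnected_connectedComponentIn

lemma IsSectorAt.isOpen [LocallyConnectedSpace X] (hU : IsSectorAt K p U) (hK : IsClosed K) :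
    IsOpen U := by
  obtain ⟨-, N, hN, -, x, -, rfl⟩ := hU
  exact (hN.sdiff hK).connectedComponentIn

lemma IsSectorAt.disjoint (hU : IsSectorAt K p U) : Disjoint U K := by
  obtain ⟨-, N, -, -, x, -, rfl⟩ := hU
  exact disjoint_sdiff_left.mono_left (connectedComponentIn_subset _ _)

lemma IsSectorAt.nonempty (hU : IsSectorAt K p U) : U.Nonempty :=
  closure_nonempty_iff.1 ⟨p, hU.1⟩

-- `p` is in the closure of finitely many smaller sectors, hence in the closure of one of them.
lemma IsSectorAt.exists_subset (hU : IsSectorAt K p U) (hfin : HasFinitelyManySectorsAt K p)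
    (hW : W ∈ 𝓝 p) : ∃ U' ⊆ U ∩ W, IsSectorAt K p U' := by
  obtain ⟨hpU, N₀, hN₀, hpN₀, x, -, rfl⟩ := hU
  obtain ⟨N, hN, hNo, hpN, M, hM, hfinM⟩ := hfin (N₀ ∩ W) (inter_mem (hN₀.mem_nhds hpN₀) hW)
  set U := connectedComponentIn (N₀ \ K) x
  set S := U ∩ (N ∩ M)
  have hSN : S ⊆ N \ K := fun z hz => ⟨hz.2.1, (connectedComponentIn_subset _ _ hz.1).2⟩
  have hpS : p ∈ closure S := by
    rw [mem_closure_iff_frequently] at hpU ⊢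
    exact hpU.and_eventually (inter_mem (hNo.mem_nhds hpN) hM)
  have hcover : S ⊆ ⋃ C ∈ connectedComponentIn (N \ K) '' S, C := fun z hz =>
    mem_biUnion (mem_image_of_mem _ hz) (mem_connectedComponentIn (hSN hz))
  have hfinS : (connectedComponentIn (N \ K) '' S).Finite :=
    hfinM.subset (image_mono fun z hz => ⟨hz.2.2, (hSN hz).2⟩)
  have hpC := closure_mono hcover hpS
  rw [hfinS.closure_biUnion] at hpC
  obtain ⟨_, ⟨z, hz, rfl⟩, hpz⟩ := mem_iUnion₂.1 hpC
  refine ⟨connectedComponentIn (N \ K) z, subset_inter ?_ ?_, hpz, N, hNo, hpN, z, hSN hz, rfl⟩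
  · rw [show U = connectedComponentIn (N₀ \ K) z from connectedComponentIn_eq hz.1]
    exact connectedComponentIn_mono z (sdiff_subset_sdiff_left (hN.trans inter_subset_left))
  · exact (connectedComponentIn_subset _ _).trans
      (sdiff_subset.trans (hN.trans inter_subset_right))

end Sectors

variable {E : Type*} [NormedAddCommGroup E] [NormedSpace ℝ E] {K U V W : Set E} {p x : E}

lemma IsSectorAt.exists_path_to_subset (hU : IsSectorAt K p U) (hK : IsClosed K) (hp : p ∈ K)
    (hfin : HasFinitelyManySectorsAt K p) (hx : x ∈ U) (hW : W ∈ 𝓝 p) (hxW : x ∉ W)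
    (hV : V ∈ 𝓝 p) :
    ∃ U' ⊆ U ∩ W, IsSectorAt K p U' ∧ ∃ x' ∈ U', ∃ γ : Path x x', Function.Injective γ ∧
      range γ ⊆ U ∧ ∃ W' ∈ 𝓝 p, W' ⊆ V ∧ Disjoint (range γ) W' := by
  obtain ⟨U', hU'W, hU'⟩ := hU.exists_subset hfin hW
  obtain ⟨x', hx'⟩ := hU'.nonempty
  obtain ⟨γ, hγ, hγU⟩ := arcJoinedIn_of_isOpen_isPreconnected (hU.isOpen hK) hU.isPreconnected
    hx (hU'W hx').1 (ne_of_mem_of_not_mem (hU'W hx').2 hxW).symm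
  have hpγ : p ∉ range γ := fun h => hU.disjoint.notMem_of_mem_left (hγU h) hp
  have hγc : (range γ)ᶜ ∈ 𝓝 p := (isCompact_range γ.continuous).isClosed.compl_mem_nhds hpγ
  exact ⟨U', hU'W, hU', x', hx', γ, hγ, hγU, V ∩ (range γ)ᶜ, inter_mem hV hγc,
    inter_subset_left, disjoint_compl_right.mono_right inter_subset_right⟩

lemma IsSectorAt.exists_seq_path (hU : IsSectorAt K p U) (hK : IsClosed K) (hp : p ∈ K)
    (hfin : HasFinitelyManySectorsAt K p) :
    ∃ (C : ℕ → Set E) (x : ℕ → E) (γ : ∀ n, Path (x n) (x (n + 1))),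
      C 0 = U ∧ Antitone C ∧ Tendsto C atTop (𝓝 p).smallSets ∧ x 0 ∉ C 1 ∧
      ∀ n, Function.Injective (γ n) ∧ range (γ n) ⊆ C n ∧ Disjoint (range (γ n)) (C (n + 2)) := by
  obtain ⟨V, hV⟩ := (𝓝 p).exists_antitone_basis
  have hpU : p ∉ U := fun h => hU.disjoint.notMem_of_mem_left h hp
  obtain ⟨x₀, hx₀⟩ := hU.nonempty
  have hx₀p : p ≠ x₀ := (ne_of_mem_of_not_mem hx₀ hpU).symm
  -- A state is a sector, a point of it, and a neighbourhood of `p` which the next sector must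
  -- stay in: it is disjoint from the path that has just been chosen.
  let State := {s : Set E × E × Set E //
    IsSectorAt K p s.1 ∧ s.2.1 ∈ s.1 ∧ s.2.2 ∈ 𝓝 p ∧ s.2.1 ∉ s.2.2}
  have hstep : ∀ (n : ℕ) (s : State), ∃ (t : State) (γ : Path s.1.2.1 t.1.2.1),
      t.1.1 ⊆ s.1.1 ∩ s.1.2.2 ∧ t.1.2.2 ⊆ V n ∧ Function.Injective γ ∧ range γ ⊆ s.1.1 ∧
      Disjoint (range γ) t.1.2.2 := fun n ⟨⟨C, x, W⟩, hC, hx, hW, hxW⟩ => by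
    obtain ⟨C', hC'W, hC', x', hx', γ, hγ, hγC, W', hW', hWV, hdisj⟩ :=
      hC.exists_path_to_subset hK hp hfin hx hW hxW (hV.mem n)
    have hx'W' : x' ∉ W' := hdisj.notMem_of_mem_left ⟨1, γ.target⟩
    exact ⟨⟨⟨C', x', W'⟩, hC', hx', hW', hx'W'⟩, γ, hC'W, hWV, hγ, hγC, hdisj⟩
  choose next γ hsub hWV hγ hγC hdisj using hstep
  let s : ℕ → State := fun n =>
    Nat.rec ⟨⟨U, x₀, {x₀}ᶜ⟩, hU, hx₀, isOpen_compl_singleton.mem_nhds hx₀p, by simp⟩ next n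
  have hanti : Antitone fun n => (s n).1.1 :=
    antitone_nat_of_succ_le fun n => (hsub n (s n)).trans inter_subset_left
  have hsW : ∀ n, (s (n + 1)).1.1 ⊆ (s n).1.2.2 := fun n => (hsub n (s n)).trans inter_subset_right
  refine ⟨fun n => (s n).1.1, fun n => (s n).1.2.1, fun n => γ n (s n), rfl, hanti, ?_,
    fun h => hsW 0 h rfl, fun n => ⟨hγ n _, hγC n _, (hdisj n _).mono_right (hsW (n + 1))⟩⟩
  refine tendsto_smallSets_iff.2 fun O hO => ?_
  obtain ⟨n, hn⟩ := hV.mem_iff.1 hO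
  filter_upwards [eventually_ge_atTop (n + 2)] with m hm
  exact (hanti hm).trans ((hsW (n + 1)).trans ((hWV n (s n)).trans hn))

lemma IsSectorAt.exists_arcJoinedIn (hU : IsSectorAt K p U) (hK : IsClosed K) (hp : p ∈ K)
    (hfin : HasFinitelyManySectorsAt K p) : ∃ y ∈ U, ArcJoinedIn (insert p U) p y := by
  obtain ⟨C, x, γ, rfl, hanti, hlim, hx₀, hγ⟩ := hU.exists_seq_path hK hp hfin
  have hγC : ∀ n m, n ≤ m → range (γ m) ⊆ C n := fun n m hnm =>
    (hγ m).2.1.trans (hanti hnm)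
  obtain ⟨B, y, hy, hB, hBγ, hBB⟩ := exists_arcJoinedIn_seq_inter_subset γ (fun n => (hγ n).1)
    (fun h => hx₀ ((hγ 1).2.1 h)) fun n m hnm => (hγ n).2.2.mono_right (hγC _ _ hnm)
  have hBC : ∀ n, B n ⊆ C n := fun n => (hBγ n).trans (hγ n).2.1
  have hBU : ⋃ n, B n ⊆ C 0 := iUnion_subset fun n => (hBC n).trans (hanti n.zero_le)
  refine ⟨x 0, (hγ 0).2.1 ⟨0, (γ 0).source⟩, ?_⟩
  rw [← hy]
  refine (arcJoinedIn_insert_iUnion hB hBB (hlim.smallSets_mono ?_) fun n h => ?_).mono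
    (insert_subset_insert hBU)
  · exact .of_forall hBC
  · exact hU.disjoint.notMem_of_mem_left (hBU (mem_iUnion_of_mem n h)) hp

end Accessibility

/-! ### Drawings -/

lemma exists_continuousOn_injOn_image_Icc_eq_range {X : Type*} [TopologicalSpace X] {x y : X}
    {γ : Path x y} (hγ : Function.Injective γ) : ∃ η : ℝ → X, ContinuousOn η (Icc 0 1) ∧
      InjOn η (Icc 0 1) ∧ η 0 = x ∧ η 1 = y ∧ range γ = η '' Icc 0 1 := by
  refine ⟨γ.extend, γ.continuous_extend.continuousOn, fun s hs t ht hst => ?_, γ.extend_zero,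
    γ.extend_one, (γ.image_extend_of_subset subset_rfl).symm⟩
  rw [γ.extend_apply hs, γ.extend_apply ht] at hst
  exact congrArg Subtype.val (hγ hst)

namespace Drawing

section Arcs

variable {V : Type} {G : SimpleGraph V} (D : Drawing G) {u v w : V} {e f : Sym2 V} {p : ℝ × ℝ}

lemma exists_path_range_eq_arc (h : G.Adj u v) :
    ∃ γ : Path (D.pos u) (D.pos v), Function.Injective γ ∧ range γ = D.arc h := by
  obtain ⟨γ, hγc, hγi, hγ0, hγ1, hγ⟩ := D.arc_isArc h
  refine ⟨⟨⟨(Icc 0 1).domRestrict γ, hγc.domRestrict⟩, hγ0, hγ1⟩, hγi.injective, ?_⟩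
  exact (range_domRestrict γ _).trans hγ.symm

lemma left_mem_arc (h : G.Adj u v) : D.pos u ∈ D.arc h := by
  obtain ⟨γ, -, hγ⟩ := D.exists_path_range_eq_arc h
  exact hγ ▸ γ.source_mem_range

lemma right_mem_arc (h : G.Adj u v) : D.pos v ∈ D.arc h := by
  obtain ⟨γ, -, hγ⟩ := D.exists_path_range_eq_arc h
  exact hγ ▸ γ.target_mem_range

lemma isClosed_arc (h : G.Adj u v) : IsClosed (D.arc h) := by
  obtain ⟨γ, -, hγ⟩ := D.exists_path_range_eq_arc h
  exact hγ ▸ (isCompact_range γ.continuous).isClosed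

lemma arcInt_nonempty (h : G.Adj u v) : (D.arcInt h).Nonempty := by
  obtain ⟨γ, hγi, hγ⟩ := D.exists_path_range_eq_arc h
  let half : unitInterval := ⟨1 / 2, by norm_num, by norm_num⟩
  have half_ne_zero : half ≠ 0 := fun h => by simpa [half] using congrArg Subtype.val h
  have half_ne_one : half ≠ 1 := fun h => by simpa [half] using congrArg Subtype.val h
  refine ⟨γ half, hγ ▸ mem_range_self half, ?_⟩
  exact not_or.2 ⟨fun h => half_ne_zero (hγi (h.trans γ.source.symm)),
    fun h => half_ne_one (hγi (h.trans γ.target.symm))⟩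

/-- The arc drawn for an abstract edge `e : Sym2 V`; it is empty when `e` is not an edge. -/
def edgeArc (e : Sym2 V) : Set (ℝ × ℝ) :=
  {p | ∃ (u v : V) (h : G.Adj u v), e = s(u, v) ∧ p ∈ D.arc h}

lemma edgeArc_mk (h : G.Adj u v) : D.edgeArc s(u, v) = D.arc h := by
  refine Subset.antisymm ?_ fun p hp => ⟨u, v, h, rfl, hp⟩
  rintro p ⟨u', v', h', he, hp⟩
  rcases Sym2.eq_iff.1 he with ⟨rfl, rfl⟩ | ⟨rfl, rfl⟩
  · exact hp
  · rwa [← D.arc_symm h]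

lemma edgeInt_mk (h : G.Adj u v) : D.edgeInt s(u, v) = D.arcInt h := by
  refine Subset.antisymm ?_ fun p hp => ⟨u, v, h, rfl, hp⟩
  rintro p ⟨u', v', h', he, hp⟩
  rcases Sym2.eq_iff.1 he with ⟨rfl, rfl⟩ | ⟨rfl, rfl⟩
  · exact hp
  · rwa [arcInt, ← D.arc_symm h, pair_comm]

lemma edgeArc_subset (e : Sym2 V) : D.edgeArc e ⊆ range D.pos ∪ D.edgeInt e := by
  rintro p ⟨u, v, h, rfl, hp⟩
  by_cases hend : p ∈ ({D.pos u, D.pos v} : Set (ℝ × ℝ))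
  · rcases hend with rfl | rfl <;> exact Or.inl (mem_range_self _)
  · exact Or.inr ⟨u, v, h, rfl, hp, hend⟩

variable {D}

lemma mem_edgeSet_of_mem_edgeInt (hp : p ∈ D.edgeInt e) : e ∈ G.edgeSet := by
  obtain ⟨u, v, h, rfl, -⟩ := hp
  exact h

lemma Cross.symm (h : D.Cross e f) : D.Cross f e :=
  ⟨h.1.symm, inter_comm _ (D.edgeInt f) ▸ h.2⟩

lemma IsGood.not_cross (hD : D.IsGood) (he : u ∈ e) (hf : u ∈ f) : ¬D.Cross e f := by
  rintro ⟨hne, p, hpe, hpf⟩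
  obtain ⟨v, rfl⟩ := he
  obtain ⟨w, rfl⟩ := hf
  have huv : G.Adj u v := mem_edgeSet_of_mem_edgeInt hpe
  have huw : G.Adj u w := mem_edgeSet_of_mem_edgeInt hpf
  rw [D.edgeInt_mk huv] at hpe
  rw [D.edgeInt_mk huw] at hpf
  have hdisj := hD.2.2 huv huw fun hvw => hne (by rw [hvw])
  exact (hdisj ▸ ⟨hpe, hpf⟩ : p ∈ (∅ : Set (ℝ × ℝ)))

lemma IsGood.pos_notMem_edgeInt (hD : D.IsGood) : D.pos w ∉ D.edgeInt e := by
  rintro ⟨u, v, h, -, hw, hend⟩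
  rcases hD.1 w h hw with rfl | rfl <;> simp at hend

end Arcs

section Faces

variable {V : Type} {G : SimpleGraph V} {D : Drawing G} {u v : V} {F : Set (ℝ × ℝ)}
  {p q : ℝ × ℝ}

lemma pos_mem_drawingSet (v : V) : D.pos v ∈ D.drawingSet :=
  Or.inl (mem_range_self v)

lemma arc_subset_drawingSet (h : G.Adj u v) : D.arc h ⊆ D.drawingSet := fun p hp =>
  Or.inr (by simpa only [mem_iUnion] using ⟨u, v, h, hp⟩)

lemma edgeInt_subset_drawingSet (e : Sym2 V) : D.edgeInt e ⊆ D.drawingSet := by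
  rintro p ⟨u, v, h, -, hp, -⟩
  exact arc_subset_drawingSet h hp

variable (D) in
/-- The closed pieces whose union is the drawing: the vertices and the arcs of the edges. -/
def piece : V ⊕ G.edgeSet → Set (ℝ × ℝ) :=
  Sum.elim (fun v => {D.pos v}) fun e => D.edgeArc e

lemma iUnion_piece : ⋃ i, D.piece i = D.drawingSet := by
  refine Subset.antisymm (iUnion_subset ?_) (union_subset ?_ ?_)
  · rintro (v | ⟨⟨u, v⟩, h⟩)
    · exact singleton_subset_iff.2 (pos_mem_drawingSet v)
    · exact (D.edgeArc_mk h).trans_subset (arc_subset_drawingSet h)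
  · exact range_subset_iff.2 fun v => mem_iUnion.2 ⟨Sum.inl v, rfl⟩
  · refine iUnion_subset fun u => iUnion_subset fun v => iUnion_subset fun h => ?_
    exact (D.edgeArc_mk h).symm.trans_subset (subset_iUnion D.piece (Sum.inr ⟨s(u, v), h⟩))

lemma hasLocalLogSplittings_preimage_piece (φ : ℂ ≃ₜ ℝ × ℝ) (i : V ⊕ G.edgeSet) :
    HasLocalLogSplittings (φ ⁻¹' D.piece i) := by
  rw [← φ.image_symm]
  rcases i with v | ⟨⟨u, v⟩, h⟩
  · exact image_singleton ▸ hasLocalLogSplittings_singleton _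
  · obtain ⟨γ, hγi, hγ⟩ := D.exists_path_range_eq_arc h
    have hpiece : φ.symm '' D.piece (Sum.inr ⟨s(u, v), h⟩) =
        range (γ.map φ.symm.continuous) := by
      rw [piece, Sum.elim_inr, D.edgeArc_mk h, ← hγ, ← range_comp, Path.map_coe]
    exact hpiece ▸ hasLocalLogSplittings_range (φ.symm.injective.comp hγi)

lemma IsFace.isPreconnected (hF : D.IsFace F) : IsPreconnected F := by
  obtain ⟨p, -, rfl⟩ := hF
  exact isPreconnected_connectedComponentIn

lemma IsFace.notMem_drawingSet (hF : D.IsFace F) (hp : p ∈ F) : p ∉ D.drawingSet := by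
  obtain ⟨q, -, rfl⟩ := hF
  exact connectedComponentIn_subset _ _ hp

lemma IsFace.isSectorAt (hF : D.IsFace F) (hp : p ∈ frontier F) : IsSectorAt D.drawingSet p F := by
  obtain ⟨x, hx, rfl⟩ := hF
  refine ⟨frontier_subset_closure hp, univ, isOpen_univ, mem_univ p, x, ⟨mem_univ x, hx⟩, ?_⟩
  rw [compl_eq_univ_sdiff]

variable [Finite V]

lemma isClosed_drawingSet : IsClosed D.drawingSet :=
  (finite_range D.pos).isClosed.union <| isClosed_iUnion_of_finite fun _ =>
    isClosed_iUnion_of_finite fun _ => isClosed_iUnion_of_finite D.isClosed_arc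

lemma IsGood.finite_piece_inter (hD : D.IsGood) {i j : V ⊕ G.edgeSet} (hij : i ≠ j) :
    (D.piece i ∩ D.piece j).Finite := by
  rcases i with v | e
  · exact (finite_singleton _).subset inter_subset_left
  rcases j with v | f
  · exact (finite_singleton _).subset inter_subset_right
  have hef : (e : Sym2 V) ≠ f := fun h => hij (congrArg Sum.inr (Subtype.ext h))
  refine ((finite_range D.pos).union (hD.2.1 e f hef).finite).subset ?_
  rw [union_inter_distrib_left]
  exact inter_subset_inter (D.edgeArc_subset e) (D.edgeArc_subset f)

lemma IsGood.hasFinitelyManySectorsAt_drawingSet (hD : D.IsGood) (p : ℝ × ℝ) :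
    HasFinitelyManySectorsAt D.drawingSet p := by
  let φ : ℂ ≃ₜ ℝ × ℝ := Complex.equivRealProdCLM.toHomeomorph
  have hfin : Pairwise fun i j => (φ ⁻¹' D.piece i ∩ φ ⁻¹' D.piece j).Finite :=
    fun i j hij => Finite.preimage (s := D.piece i ∩ D.piece j) φ.injective.injOn
      (hD.finite_piece_inter hij)
  have hsectors := hasFinitelyManySectorsAt_iUnion
    (hasLocalLogSplittings_preimage_piece φ) hfin (φ.symm p)
  rw [← preimage_iUnion, iUnion_piece] at hsectors
  simpa only [← preimage_comp, φ.self_comp_symm, preimage_id] using hsectors.preimage φ.symm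

lemma IsFace.isOpen (hF : D.IsFace F) : IsOpen F := by
  obtain ⟨p, -, rfl⟩ := hF
  exact isClosed_drawingSet.isOpen_compl.connectedComponentIn

lemma IsFace.arcJoinedIn (hF : D.IsFace F) (hD : D.IsGood) (hp : p ∈ D.drawingSet)
    (hq : q ∈ D.drawingSet) (hpF : p ∈ frontier F) (hqF : q ∈ frontier F) (hpq : p ≠ q) :
    ArcJoinedIn (insert p (insert q F)) p q := by
  have accessible {r : ℝ × ℝ} (hr : r ∈ D.drawingSet) (hrF : r ∈ frontier F) :
      ∃ x ∈ F, ArcJoinedIn (insert r F) r x :=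
    (hF.isSectorAt hrF).exists_arcJoinedIn isClosed_drawingSet hr
      (hD.hasFinitelyManySectorsAt_drawingSet r)
  obtain ⟨x, hx, hpx⟩ := accessible hp hpF
  obtain ⟨y, hy, hqy⟩ := accessible hq hqF
  have hpx := hpx.mono (insert_subset_insert (subset_insert q F))
  have hyq := hqy.symm.mono (subset_insert p _)
  rcases eq_or_ne x y with rfl | hxy
  · exact hpx.trans hyq hpq
  have hxy := (arcJoinedIn_of_isOpen_isPreconnected hF.isOpen hF.isPreconnected hx hy hxy).mono
    ((subset_insert q F).trans (subset_insert p _))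
  exact (hpx.trans hxy fun hpy => hF.notMem_drawingSet hy (hpy ▸ hp)).trans hyq hpq

lemma IsFace.exists_path_inter_drawingSet_subset {F₁ F₂ : Set (ℝ × ℝ)} {q₁ q₂ : ℝ × ℝ}
    (hF₁ : D.IsFace F₁) (hF₂ : D.IsFace F₂) (hD : D.IsGood)
    (hq₁ : q₁ ∈ D.drawingSet) (hp : p ∈ D.drawingSet) (hq₂ : q₂ ∈ D.drawingSet)
    (hq₁F : q₁ ∈ frontier F₁ \ frontier F₂) (hpF : p ∈ frontier F₁ ∩ frontier F₂)
    (hq₂F : q₂ ∈ frontier F₂ \ frontier F₁) :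
    ∃ γ : Path q₁ q₂, Function.Injective γ ∧ range γ ∩ D.drawingSet ⊆ {q₁, p, q₂} := by
  have hq₁p := hF₁.arcJoinedIn hD hq₁ hp hq₁F.1 hpF.1 (ne_of_mem_of_not_mem hpF.2 hq₁F.2).symm
  have hpq₂ := hF₂.arcJoinedIn hD hp hq₂ hpF.2 hq₂F.1 (ne_of_mem_of_not_mem hpF.1 hq₂F.2)
  obtain ⟨γ, hγi, hγ⟩ := (hq₁p.mono subset_union_left).trans (hpq₂.mono subset_union_right)
    (ne_of_mem_of_not_mem hq₁F.1 hq₂F.2)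
  refine ⟨γ, hγi, ?_⟩
  rintro r ⟨hrγ, hr⟩
  rcases hγ hrγ with (rfl | rfl | hrF) | (rfl | rfl | hrF)
  · exact Or.inl rfl
  · exact Or.inr (Or.inl rfl)
  · exact (hF₁.notMem_drawingSet hrF hr).elim
  · exact Or.inr (Or.inl rfl)
  · exact Or.inr (Or.inr rfl)
  · exact (hF₂.notMem_drawingSet hrF hr).elim

end Faces

section AddArc

variable {V : Type} {G : SimpleGraph V} (D : Drawing G) {u v v₁ v₂ : V}

open Classical in
/-- The drawing obtained from `D` by adding an edge `v₁v₂` drawn along the injective path `γ`.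
If `v₁` and `v₂` are already adjacent then the old arc is kept and `γ` is ignored. -/
noncomputable def addArc (γ : Path (D.pos v₁) (D.pos v₂)) (hγ : Function.Injective γ) :
    Drawing (G ⊔ SimpleGraph.fromEdgeSet {s(v₁, v₂)}) where
  pos := D.pos
  pos_inj := D.pos_inj
  arc u v _ := if h : G.Adj u v then D.arc h else range γ
  arc_symm u v _ := by
    by_cases h : G.Adj u v
    · simp only [h, h.symm, dite_true, D.arc_symm h]
    · simp only [h, G.adj_comm v u, dite_false]
  arc_isArc u v huv := by
    by_cases h : G.Adj u v
    · simpa only [h, dite_true] using D.arc_isArc h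
    have hnew : s(u, v) = s(v₁, v₂) :=
      ((SimpleGraph.fromEdgeSet_adj _).1 (huv.resolve_left h)).1
    simp only [h, dite_false]
    rcases Sym2.eq_iff.1 hnew with ⟨rfl, rfl⟩ | ⟨rfl, rfl⟩
    · exact exists_continuousOn_injOn_image_Icc_eq_range hγ
    · exact γ.symm_range ▸ exists_continuousOn_injOn_image_Icc_eq_range
        (hγ.comp unitInterval.symm_bijective.injective)

variable {D} {γ : Path (D.pos v₁) (D.pos v₂)} {hγ : Function.Injective γ} {e f g : Sym2 V}

lemma addArc_arc_of_adj (h : G.Adj u v)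
    (h' : (G ⊔ SimpleGraph.fromEdgeSet {s(v₁, v₂)}).Adj u v) :
    (D.addArc γ hγ).arc h' = D.arc h :=
  dif_pos h

lemma addArc_arc_of_not_adj (h : ¬G.Adj u v)
    (h' : (G ⊔ SimpleGraph.fromEdgeSet {s(v₁, v₂)}).Adj u v) :
    (D.addArc γ hγ).arc h' = range γ :=
  dif_neg h

lemma addArc_edgeInt_of_ne (hf : f ≠ s(v₁, v₂)) :
    (D.addArc γ hγ).edgeInt f = D.edgeInt f := by
  ext q
  constructor
  · rintro ⟨u, v, h, rfl, hq, hend⟩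
    have hadj : G.Adj u v := h.resolve_right fun h' => hf ((SimpleGraph.fromEdgeSet_adj _).1 h').1
    exact ⟨u, v, hadj, rfl, addArc_arc_of_adj hadj h ▸ hq, hend⟩
  · rintro ⟨u, v, h, rfl, hq, hend⟩
    exact ⟨u, v, Or.inl h, rfl, (addArc_arc_of_adj h (Or.inl h)).symm ▸ hq, hend⟩

lemma addArc_edgeInt_subset_range (hadj : ¬G.Adj v₁ v₂) :
    (D.addArc γ hγ).edgeInt s(v₁, v₂) ⊆ range γ := by
  rintro q ⟨u, v, h, hnew, hq, -⟩
  have huv : ¬G.Adj u v := by rwa [← SimpleGraph.mem_edgeSet, ← hnew]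
  exact addArc_arc_of_not_adj huv h ▸ hq

lemma cross_addArc_iff (he : e ≠ s(v₁, v₂)) (hf : f ≠ s(v₁, v₂)) :
    (D.addArc γ hγ).Cross e f ↔ D.Cross e f := by
  rw [Cross, addArc_edgeInt_of_ne he, addArc_edgeInt_of_ne hf, Cross]

lemma eq_of_cross_addArc (hadj : ¬G.Adj v₁ v₂)
    (hcross : ∀ f, (range γ ∩ D.edgeInt f).Nonempty → f = e)
    (hf : (D.addArc γ hγ).Cross s(v₁, v₂) f) : f = e := by
  obtain ⟨hne, q, hq, hqf⟩ := hf
  exact hcross f ⟨q, addArc_edgeInt_subset_range hadj hq, addArc_edgeInt_of_ne hne.symm ▸ hqf⟩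

lemma IsOnePlanar.addArc (hD : D.IsOnePlanar) (hadj : ¬G.Adj v₁ v₂)
    (hcross : ∀ f, (range γ ∩ D.edgeInt f).Nonempty → f = e) (he : ∀ f, ¬D.Cross e f) :
    (D.addArc γ hγ).IsOnePlanar := by
  intro x f hf g hg
  rcases eq_or_ne x s(v₁, v₂) with rfl | hx
  · rw [eq_of_cross_addArc hadj hcross hf, eq_of_cross_addArc hadj hcross hg]
  have only_new {y z : Sym2 V} (hy : (D.addArc γ hγ).Cross x y) (hyz : y = s(v₁, v₂))
      (hz : (D.addArc γ hγ).Cross x z) : z = s(v₁, v₂) := by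
    by_contra hz'
    obtain rfl := eq_of_cross_addArc hadj hcross (hyz ▸ hy.symm)
    exact he z ((cross_addArc_iff hx hz').1 hz)
  by_cases hf' : f = s(v₁, v₂)
  · exact hf'.trans (only_new hf hf' hg).symm
  have hg' : g ≠ s(v₁, v₂) := fun hg' => hf' (only_new hg hg' hf)
  exact hD x ((cross_addArc_iff hx hf').1 hf) ((cross_addArc_iff hx hg').1 hg)

lemma IsGood.addArc_eq_or_eq_of_pos_mem_arc (hD : D.IsGood)
    (hpos : ∀ w, D.pos w ∈ range γ → w ∈ s(v₁, v₂)) (w : V)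
    (h : (G ⊔ SimpleGraph.fromEdgeSet {s(v₁, v₂)}).Adj u v)
    (hw : D.pos w ∈ (D.addArc γ hγ).arc h) : w = u ∨ w = v := by
  by_cases huv : G.Adj u v
  · exact hD.1 w huv (addArc_arc_of_adj huv h ▸ hw)
  have hnew : s(u, v) = s(v₁, v₂) := ((SimpleGraph.fromEdgeSet_adj _).1 (h.resolve_left huv)).1
  rw [← Sym2.mem_iff, hnew]
  exact hpos w (addArc_arc_of_not_adj huv h ▸ hw)

lemma IsGood.subsingleton_addArc_edgeInt_inter (hD : D.IsGood) (hadj : ¬G.Adj v₁ v₂)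
    (hcross : ∀ f, (range γ ∩ D.edgeInt f).Nonempty → f = e)
    (hone : (range γ ∩ D.edgeInt e).Subsingleton) (hfg : f ≠ g) :
    ((D.addArc γ hγ).edgeInt f ∩ (D.addArc γ hγ).edgeInt g).Subsingleton := by
  have new_inter {f : Sym2 V} (hf : f ≠ s(v₁, v₂)) :
      ((D.addArc γ hγ).edgeInt s(v₁, v₂) ∩ (D.addArc γ hγ).edgeInt f).Subsingleton := by
    rintro q ⟨hq, hqf⟩ r ⟨hr, hrf⟩
    obtain rfl := eq_of_cross_addArc hadj hcross ⟨hf.symm, q, hq, hqf⟩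
    rw [addArc_edgeInt_of_ne hf] at hqf hrf
    exact hone ⟨addArc_edgeInt_subset_range hadj hq, hqf⟩
      ⟨addArc_edgeInt_subset_range hadj hr, hrf⟩
  rcases eq_or_ne f s(v₁, v₂) with rfl | hf
  · exact new_inter hfg.symm
  rcases eq_or_ne g s(v₁, v₂) with rfl | hg
  · exact inter_comm _ _ ▸ new_inter hfg
  rw [addArc_edgeInt_of_ne hf, addArc_edgeInt_of_ne hg]
  exact hD.2.1 f g hfg

lemma IsGood.not_cross_addArc (hD : D.IsGood) (hadj : ¬G.Adj v₁ v₂)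
    (hcross : ∀ f, (range γ ∩ D.edgeInt f).Nonempty → f = e)
    (he : ∀ w ∈ s(v₁, v₂), w ∉ e) {w : V} (hf : w ∈ f) (hg : w ∈ g) :
    ¬(D.addArc γ hγ).Cross f g := by
  intro hfg
  rcases eq_or_ne f s(v₁, v₂) with rfl | hf'
  · exact he w hf (eq_of_cross_addArc hadj hcross hfg ▸ hg)
  rcases eq_or_ne g s(v₁, v₂) with rfl | hg'
  · exact he w hg (eq_of_cross_addArc hadj hcross hfg.symm ▸ hf)
  exact hD.not_cross hf hg ((cross_addArc_iff hf' hg').1 hfg)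

lemma IsGood.addArc (hD : D.IsGood) (hadj : ¬G.Adj v₁ v₂)
    (hpos : ∀ w, D.pos w ∈ range γ → w ∈ s(v₁, v₂))
    (hcross : ∀ f, (range γ ∩ D.edgeInt f).Nonempty → f = e)
    (hone : (range γ ∩ D.edgeInt e).Subsingleton) (he : ∀ w ∈ s(v₁, v₂), w ∉ e) :
    (D.addArc γ hγ).IsGood := by
  refine ⟨fun w _ _ h hw => hD.addArc_eq_or_eq_of_pos_mem_arc hpos w h hw,
    fun f g hfg => hD.subsingleton_addArc_edgeInt_inter hadj hcross hone hfg,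
    fun u v w huv huw hvw => ?_⟩
  rw [← edgeInt_mk, ← edgeInt_mk, ← not_nonempty_iff_eq_empty]
  exact fun hne => hD.not_cross_addArc hadj hcross he (Sym2.mem_mk_left u v)
    (Sym2.mem_mk_left u w) ⟨fun h => hvw (Sym2.congr_right.1 h), hne⟩

lemma IsMaximalOnePlane.adj_of_path (hD : D.IsMaximalOnePlane) (he : ∀ f, ¬D.Cross e f)
    {p : ℝ × ℝ} (hp : p ∈ D.edgeInt e) (hne : v₁ ≠ v₂) (hends : ∀ w ∈ s(v₁, v₂), w ∉ e)
    (hγ : Function.Injective γ)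
    (hmeet : range γ ∩ D.drawingSet ⊆ {D.pos v₁, p, D.pos v₂}) : G.Adj v₁ v₂ := by
  obtain ⟨hgood, hplanar, hmax⟩ := hD
  by_contra hadj
  have hpos (w : V) (hw : D.pos w ∈ range γ) : w ∈ s(v₁, v₂) := by
    rcases hmeet ⟨hw, pos_mem_drawingSet w⟩ with h | h | h
    · exact Sym2.mem_iff.2 (Or.inl (D.pos_inj h))
    · exact (hgood.pos_notMem_edgeInt (h ▸ hp)).elim
    · exact Sym2.mem_iff.2 (Or.inr (D.pos_inj h))
  have eq_p {f : Sym2 V} {q : ℝ × ℝ} (hq : q ∈ range γ ∩ D.edgeInt f) : q = p := by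
    rcases hmeet ⟨hq.1, edgeInt_subset_drawingSet f hq.2⟩ with rfl | h | rfl
    · exact (hgood.pos_notMem_edgeInt hq.2).elim
    · exact h
    · exact (hgood.pos_notMem_edgeInt hq.2).elim
  have hcross (f : Sym2 V) (hf : (range γ ∩ D.edgeInt f).Nonempty) : f = e := by
    obtain ⟨q, hq⟩ := hf
    by_contra hfe
    exact he f ⟨Ne.symm hfe, p, hp, eq_p hq ▸ hq.2⟩
  have hone : (range γ ∩ D.edgeInt e).Subsingleton :=
    fun _ hq _ hr => (eq_p hq).trans (eq_p hr).symm
  exact hmax v₁ v₂ hne hadj (D.addArc γ hγ) rfl (fun _ _ h => addArc_arc_of_adj h _)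
    ⟨hgood.addArc hadj hpos hcross hone hends, hplanar.addArc hadj hcross he⟩

end AddArc

end Drawing

/-- In a maximal 1-plane graph, if two faces `F₁`, `F₂` share a non-crossing
edge and `vᵢ ∈ ∂(Fᵢ) \ ∂(F₍₃₋ᵢ₎)` for `i = 1, 2`, then `v₁` and `v₂` are adjacent. -/
theorem stmt_10 {V : Type} [Fintype V] {G : SimpleGraph V} (D : Drawing G)
    (hmax : D.IsMaximalOnePlane)
    {a b : V} (hab : G.Adj a b) (hnc : ¬∃ f, D.Cross s(a, b) f)
    {F₁ F₂ : Set (ℝ × ℝ)} (hF₁ : D.IsFace F₁) (hF₂ : D.IsFace F₂)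
    (he₁ : D.arc hab ⊆ frontier F₁) (he₂ : D.arc hab ⊆ frontier F₂)
    {v₁ v₂ : V}
    (hv₁ : v₁ ∈ D.faceVerts F₁ \ D.faceVerts F₂)
    (hv₂ : v₂ ∈ D.faceVerts F₂ \ D.faceVerts F₁) :
    G.Adj v₁ v₂ := by
  obtain ⟨p, hp⟩ := D.arcInt_nonempty hab
  obtain ⟨γ, hγ, hmeet⟩ := hF₁.exists_path_inter_drawingSet_subset hF₂ hmax.1
    (Drawing.pos_mem_drawingSet v₁) (Drawing.arc_subset_drawingSet hab hp.1)
    (Drawing.pos_mem_drawingSet v₂) hv₁ ⟨he₁ hp.1, he₂ hp.1⟩ hv₂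
  have hne : v₁ ≠ v₂ := ne_of_mem_of_not_mem hv₁.1 hv₂.2
  have pos_mem_arc {w : V} (hw : w ∈ s(a, b)) : D.pos w ∈ D.arc hab := by
    rcases Sym2.mem_iff.1 hw with rfl | rfl
    exacts [D.left_mem_arc hab, D.right_mem_arc hab]
  have hends (w : V) (hw : w ∈ s(v₁, v₂)) (hwab : w ∈ s(a, b)) : False := by
    rcases Sym2.mem_iff.1 hw with rfl | rfl
    · exact hv₁.2 (he₂ (pos_mem_arc hwab))
    · exact hv₂.2 (he₁ (pos_mem_arc hwab))
  rw [← D.edgeInt_mk hab] at hp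
  exact hmax.adj_of_path (not_exists.1 hnc) hp hne hends hγ hmeet
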